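/- Let 𝒫 be the Poissonized discrete distribution model on ℕ^k: 𝒫 = { ∏_{j=1}^k Poi(p_j) : p_j ≥ 0, Σ_{j=1}^k p_j = 1 }. There exist absolute constants c₁ > 0, C₁ > 0 and c₂ > 0 (independent of n, m, k) such that for all integers n ≥ 1, k ≥ 2 and m ≥ 0: (i) if m ≤ c₁·( n/√k + √n ) then ε*(𝒫, n, m) ≤ 0.1; and (ii) if m ≥ C₁·( n/√k + √n ) then ε*(𝒫, n, m) ≥ c₂. That is, an (n, n+m) sample amplification with error 0.1 is possible if and only if m = O(n/√k + √n). -/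

import Mathlib

open MeasureTheory ProbabilityTheory
open scoped ENNReal NNReal BigOperators

/-- Total variation distance between two measures: `sup_A |P(A) - Q(A)|`. -/
noncomputable def tvDist {X : Type*} [MeasurableSpace X] (μ ν : Measure X) : ℝ :=
  ⨆ A : {s : Set X // MeasurableSet s}, |(μ A).toReal - (ν A).toReal|

/-- Minimax sample amplification error `ε*(𝒫, n, m)` for the family `(P θ)_θ`. -/
noncomputable def ampErr {X Θ : Type*} [MeasurableSpace X] (P : Θ → Measure X)
    (n m : ℕ) : ℝ :=
  ⨅ T : {T : Kernel (Fin n → X) (Fin (n + m) → X) // IsMarkovKernel T},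
    ⨆ θ : Θ, tvDist (Measure.pi fun _ : Fin (n + m) => P θ)
      ((Measure.pi fun _ : Fin n => P θ).bind T.1)

/-- The Poissonized discrete distribution model: probability vectors `q` on `[k]`
index the product Poisson measures `∏_{j=1}^k Poi(q_j)` on `ℕ^k`. -/
noncomputable def poissonizedModel (k : ℕ)
    (q : {q : Fin k → ℝ≥0 // (∑ j, q j) = 1}) : Measure (Fin k → ℕ) :=
  Measure.pi fun j => poissonMeasure (q.1 j)

/-!
The sum of `n` independent vectors of Poisson counts with rates `q` is a sufficient statistic, and
it has rates `n q`. Hence `ampErr` is the deficiency of the Poisson vector with rates `n q` with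
respect to the one with rates `(n + m) q`.

Upper bound. If `m ≲ √n`, the two Poisson vectors themselves are close in Hellinger distance. If
`m ≲ n / √k`, half of the sample yields an estimate of `q`, and fresh Poisson counts with `m` times
the estimated rates are added to the other half; the expected squared Hellinger error is of order
`k m² / n²`.

Lower bound. Split `2 d` cells, with `d = min (k / 2) n`, into pairs, and perturb the uniform
distribution on them by moving a fraction `δ` of the mass within each pair, in a direction given by
an independent random sign, where `δ² = d / (8 n)`. From a sample of size `N` the posterior mean of
each sign has variance `I N`, and no estimate computed from this sample correlates better with the
signs. If `d (I (n + m) - I n)` is at least of order `√d`, a truncated log-likelihood score of the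
signs given their claimed posterior means detects a failure to amplify.
-/

section TotalVariation

variable {X Y : Type*} [MeasurableSpace X] [MeasurableSpace Y]

lemma integrable_of_mem_Icc {μ : Measure X} [IsFiniteMeasure μ] {f : X → ℝ} {a b : ℝ}
    (hf : Measurable f) (h : ∀ x, f x ∈ Set.Icc a b) : Integrable f μ :=
  Integrable.of_mem_Icc a b hf.aemeasurable (Filter.Eventually.of_forall h)

lemma measureReal_bind_apply (μ : Measure X) (κ : Kernel X Y) [IsMarkovKernel κ] {A : Set Y}
    (hA : MeasurableSet A) : (μ.bind κ).real A = ∫ x, (κ x).real A ∂μ := by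
  rw [measureReal_def, Measure.bind_apply hA κ.aemeasurable, ← integral_toReal]
  · rfl
  · exact (κ.measurable_coe hA).aemeasurable
  · exact Filter.Eventually.of_forall fun x => measure_lt_top _ _

lemma integral_bind_kernel (μ : Measure X) (κ : Kernel X Y) {f : Y → ℝ}
    (hf : Integrable f (μ.bind κ)) :
    ∫ y, f y ∂(μ.bind κ) = ∫ x, ∫ y, f y ∂(κ x) ∂μ :=
  Kernel.integral_comp (η := κ) (κ := Kernel.const Unit μ) (a := ()) hf

lemma tvDist_nonneg (μ ν : Measure X) : 0 ≤ tvDist μ ν :=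
  Real.iSup_nonneg fun _ => abs_nonneg _

lemma tvDist_comm (μ ν : Measure X) : tvDist μ ν = tvDist ν μ := by
  simp only [tvDist, abs_sub_comm]

lemma tvDist_le {μ ν : Measure X} {c : ℝ}
    (h : ∀ A, MeasurableSet A → |μ.real A - ν.real A| ≤ c) : tvDist μ ν ≤ c := by
  have : Nonempty {s : Set X // MeasurableSet s} := ⟨⟨∅, MeasurableSet.empty⟩⟩
  exact ciSup_le fun A => h A.1 A.2

lemma tvDist_sq_le {μ ν : Measure X} {c : ℝ}
    (h : ∀ A, MeasurableSet A → (μ.real A - ν.real A) ^ 2 ≤ c) : tvDist μ ν ^ 2 ≤ c := by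
  have hc : 0 ≤ c := (sq_nonneg _).trans (h ∅ MeasurableSet.empty)
  exact (Real.le_sqrt (tvDist_nonneg μ ν) hc).1 (tvDist_le fun A hA => Real.abs_le_sqrt (h A hA))

variable (μ ν : Measure X) [IsProbabilityMeasure μ] [IsProbabilityMeasure ν]

lemma abs_measureReal_sub_measureReal_le_one (A : Set X) : |μ.real A - ν.real A| ≤ 1 :=
  abs_sub_le_of_nonneg_of_le measureReal_nonneg measureReal_le_one measureReal_nonneg
    measureReal_le_one

lemma tvDist_le_one : tvDist μ ν ≤ 1 :=
  tvDist_le fun A _ => abs_measureReal_sub_measureReal_le_one μ ν A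

lemma abs_measureReal_sub_measureReal_le_tvDist {A : Set X} (hA : MeasurableSet A) :
    |μ.real A - ν.real A| ≤ tvDist μ ν :=
  le_ciSup (f := fun A : {s : Set X // MeasurableSet s} => |(μ A).toReal - (ν A).toReal|)
    ⟨1, by rintro _ ⟨A, rfl⟩; exact abs_measureReal_sub_measureReal_le_one μ ν A⟩ ⟨A, hA⟩

lemma tvDist_map_le {f : X → Y} (hf : Measurable f) :
    tvDist (μ.map f) (ν.map f) ≤ tvDist μ ν :=
  tvDist_le fun A hA => by
    rw [map_measureReal_apply hf hA, map_measureReal_apply hf hA]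
    exact abs_measureReal_sub_measureReal_le_tvDist μ ν (hf hA)

lemma integral_sub_integral_le_mul_tvDist {f : X → ℝ} {a b : ℝ} (hf : Measurable f)
    (h : ∀ x, f x ∈ Set.Icc a b) :
    ∫ x, f x ∂μ - ∫ x, f x ∂ν ≤ (b - a) * tvDist μ ν := by
  obtain ⟨s, hs, hνμ, hμν⟩ := hahn_decomposition μ ν
  have hab : a ≤ b := by
    obtain ⟨x⟩ := μ.nonempty_of_neZero
    exact (h x).1.trans (h x).2
  have hfi : ∀ (ρ : Measure X) [IsProbabilityMeasure ρ], Integrable f ρ := fun ρ _ =>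
    integrable_of_mem_Icc hf h
  have restrict_s : ν.restrict s ≤ μ.restrict s := Measure.le_iff.2 fun t ht => by
    rw [Measure.restrict_apply ht, Measure.restrict_apply ht]
    exact hνμ _ (ht.inter hs) Set.inter_subset_right
  have restrict_compl : μ.restrict sᶜ ≤ ν.restrict sᶜ := Measure.le_iff.2 fun t ht => by
    rw [Measure.restrict_apply ht, Measure.restrict_apply ht]
    exact hμν _ (ht.inter hs.compl) Set.inter_subset_right
  have on_s : ∫ x in s, (b - f x) ∂ν ≤ ∫ x in s, (b - f x) ∂μ :=
    integral_mono_measure restrict_s (Filter.Eventually.of_forall fun x => sub_nonneg.2 (h x).2)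
      ((integrable_const _).sub (hfi μ)).integrableOn
  have on_compl : ∫ x in sᶜ, (f x - a) ∂μ ≤ ∫ x in sᶜ, (f x - a) ∂ν :=
    integral_mono_measure restrict_compl
      (Filter.Eventually.of_forall fun x => sub_nonneg.2 (h x).1)
      ((hfi ν).sub (integrable_const _)).integrableOn
  rw [integral_sub (integrable_const _) (hfi ν).integrableOn,
    integral_sub (integrable_const _) (hfi μ).integrableOn] at on_s
  rw [integral_sub (hfi ν).integrableOn (integrable_const _),
    integral_sub (hfi μ).integrableOn (integrable_const _)] at on_compl
  simp only [integral_const, smul_eq_mul, measureReal_restrict_apply_univ,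
    probReal_compl_eq_one_sub hs] at on_s on_compl
  have hμ := integral_add_compl hs (hfi μ)
  have hν := integral_add_compl hs (hfi ν)
  calc ∫ x, f x ∂μ - ∫ x, f x ∂ν ≤ (b - a) * (μ.real s - ν.real s) := by linarith
    _ ≤ (b - a) * tvDist μ ν := by
      have := (abs_le.1 (abs_measureReal_sub_measureReal_le_tvDist μ ν hs)).2
      gcongr

lemma tvDist_bind_le (κ : Kernel X Y) [IsMarkovKernel κ] :
    tvDist (μ.bind κ) (ν.bind κ) ≤ tvDist μ ν := by
  refine tvDist_le fun A hA => ?_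
  have hm : Measurable fun x => (κ x).real A := (κ.measurable_coe hA).ennreal_toReal
  have hI : ∀ x, (κ x).real A ∈ Set.Icc (0 : ℝ) 1 := fun x =>
    ⟨measureReal_nonneg, measureReal_le_one⟩
  have hμν := integral_sub_integral_le_mul_tvDist μ ν hm hI
  have hνμ := integral_sub_integral_le_mul_tvDist ν μ hm hI
  rw [tvDist_comm] at hνμ
  rw [measureReal_bind_apply μ κ hA, measureReal_bind_apply ν κ hA, abs_le]
  constructor <;> linarith

lemma sq_integral_le_integral_sq {f : X → ℝ} (hf : MemLp f 2 μ) :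
    (∫ x, f x ∂μ) ^ 2 ≤ ∫ x, f x ^ 2 ∂μ := by
  have := variance_nonneg f μ
  rw [variance_eq_sub hf] at this
  simpa using this

lemma tvDist_bind_bind_sq_le (κ η : Kernel X Y) [IsMarkovKernel κ] [IsMarkovKernel η]
    {F : X → ℝ} (hF : Integrable F μ) (h : ∀ x, tvDist (κ x) (η x) ^ 2 ≤ F x) :
    tvDist (μ.bind κ) (μ.bind η) ^ 2 ≤ ∫ x, F x ∂μ := by
  refine tvDist_sq_le fun A hA => ?_
  have hm : ∀ ξ : Kernel X Y, Measurable fun x => (ξ x).real A := fun ξ =>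
    (ξ.measurable_coe hA).ennreal_toReal
  have hint : ∀ (ξ : Kernel X Y) [IsMarkovKernel ξ], Integrable (fun x => (ξ x).real A) μ :=
    fun ξ _ => integrable_of_mem_Icc (hm ξ) fun x => ⟨measureReal_nonneg, measureReal_le_one⟩
  have hL2 : MemLp (fun x => (κ x).real A - (η x).real A) 2 μ :=
    MemLp.of_bound ((hm κ).sub (hm η)).aestronglyMeasurable 1
      (Filter.Eventually.of_forall fun x => abs_measureReal_sub_measureReal_le_one _ _ A)
  rw [measureReal_bind_apply μ κ hA, measureReal_bind_apply μ η hA,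
    ← integral_sub (hint κ) (hint η)]
  refine (sq_integral_le_integral_sq μ hL2).trans (integral_mono hL2.integrable_sq hF fun x => ?_)
  refine le_trans ?_ (h x)
  exact sq_le_sq' (abs_le.1 (abs_measureReal_sub_measureReal_le_tvDist _ _ hA)).1
    (abs_le.1 (abs_measureReal_sub_measureReal_le_tvDist _ _ hA)).2

end TotalVariation

section Density

variable {X Y : Type*} [MeasurableSpace X] [MeasurableSpace Y]

lemma integral_withDensity_ofReal {μ : Measure X} {p : X → ℝ} (hp : Measurable p)
    (h0 : ∀ x, 0 ≤ p x) (f : X → ℝ) :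
    ∫ x, f x ∂(μ.withDensity fun x => ENNReal.ofReal (p x)) = ∫ x, p x * f x ∂μ := by
  rw [integral_withDensity_eq_integral_toReal_smul hp.ennreal_ofReal
    (Filter.Eventually.of_forall fun x => ENNReal.ofReal_lt_top)]
  simp only [ENNReal.toReal_ofReal (h0 _), smul_eq_mul]

lemma measureReal_withDensity_ofReal {μ : Measure X} {p : X → ℝ} (hp : Measurable p)
    (h0 : ∀ x, 0 ≤ p x) {A : Set X} (hA : MeasurableSet A) :
    (μ.withDensity fun x => ENNReal.ofReal (p x)).real A = ∫ x in A, p x ∂μ := by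
  rw [measureReal_def, withDensity_apply _ hA, integral_eq_lintegral_of_nonneg_ae
    (Filter.Eventually.of_forall h0) hp.aestronglyMeasurable]

lemma integrable_of_isFiniteMeasure_withDensity {μ : Measure X} {p : X → ℝ} (hp : Measurable p)
    (h0 : ∀ x, 0 ≤ p x) [IsFiniteMeasure (μ.withDensity fun x => ENNReal.ofReal (p x))] :
    Integrable p μ := by
  refine ⟨hp.aestronglyMeasurable, ?_⟩
  rw [hasFiniteIntegral_iff_ofReal (Filter.Eventually.of_forall h0)]
  have := measure_lt_top (μ.withDensity fun x => ENNReal.ofReal (p x)) Set.univ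
  rwa [withDensity_apply _ MeasurableSet.univ, Measure.restrict_univ] at this

lemma isProbabilityMeasure_withDensity_ofReal {μ : Measure X} {p : X → ℝ}
    (hp : Integrable p μ) (h0 : ∀ x, 0 ≤ p x) (h1 : ∫ x, p x ∂μ = 1) :
    IsProbabilityMeasure (μ.withDensity fun x => ENNReal.ofReal (p x)) :=
  ⟨by rw [withDensity_apply _ MeasurableSet.univ, Measure.restrict_univ,
    ← ofReal_integral_eq_lintegral_ofReal hp (Filter.Eventually.of_forall h0), h1,
    ENNReal.ofReal_one]⟩

lemma map_withDensity_comp {μ : Measure X} {φ : X → Y} (hφ : Measurable φ) {g : Y → ℝ≥0∞}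
    (hg : Measurable g) :
    (μ.withDensity fun x => g (φ x)).map φ = (μ.map φ).withDensity g := by
  ext s hs
  rw [Measure.map_apply hφ hs, withDensity_apply _ (hφ hs), withDensity_apply _ hs,
    setLIntegral_map hs hg hφ]

-- Half of the Fisher-Neyman factorization criterion.
lemma withDensity_comp_eq_bind_condDistrib [StandardBorelSpace X] [Nonempty X]
    (μ : Measure X) [IsFiniteMeasure μ] {φ : X → Y} (hφ : Measurable φ)
    {g : Y → ℝ≥0∞} (hg : Measurable g) :
    μ.withDensity (fun x => g (φ x)) =
      ((μ.withDensity (fun x => g (φ x))).map φ).bind (condDistrib id φ μ) := by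
  ext A hA
  rw [map_withDensity_comp hφ hg, Measure.bind_apply hA (condDistrib id φ μ).aemeasurable,
    lintegral_withDensity_eq_lintegral_mul _ hg ((condDistrib id φ μ).measurable_coe hA),
    withDensity_apply _ hA]
  have joint := compProd_map_condDistrib (X := φ) (mβ := inferInstance) (aemeasurable_id (μ := μ))
  have hF : Measurable fun z : Y × X => g z.1 * A.indicator 1 z.2 :=
    (hg.comp measurable_fst).mul ((measurable_one.indicator hA).comp measurable_snd)
  calc ∫⁻ x in A, g (φ x) ∂μ
      = ∫⁻ z, g z.1 * A.indicator 1 z.2 ∂(μ.map fun a => (φ a, id a)) := by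
        rw [lintegral_map hF (hφ.prodMk measurable_id), ← lintegral_indicator hA]
        refine lintegral_congr fun x => ?_
        by_cases hx : x ∈ A <;> simp [hx]
    _ = ∫⁻ y, ∫⁻ x, g y * A.indicator 1 x ∂(condDistrib id φ μ y) ∂(μ.map φ) := by
        rw [← joint, Measure.lintegral_compProd hF]
    _ = _ := lintegral_congr fun y => by
        rw [lintegral_const_mul _ (measurable_one.indicator hA), lintegral_indicator_one hA]
        rfl

lemma pi_withDensity_ofReal {ι : Type*} [Fintype ι] {α : ι → Type*} [∀ i, Countable (α i)]
    [∀ i, MeasurableSpace (α i)] [∀ i, MeasurableSingletonClass (α i)]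
    (μ : ∀ i, Measure (α i)) [∀ i, SigmaFinite (μ i)] {p : ∀ i, α i → ℝ}
    (h0 : ∀ i x, 0 ≤ p i x) :
    Measure.pi (fun i => (μ i).withDensity fun x => ENNReal.ofReal (p i x)) =
      (Measure.pi μ).withDensity fun x => ENNReal.ofReal (∏ i, p i (x i)) := by
  refine Measure.ext_of_singleton fun x => ?_
  rw [withDensity_apply _ (measurableSet_singleton x), lintegral_singleton, Measure.pi_singleton,
    Measure.pi_singleton, ENNReal.ofReal_prod_of_nonneg (fun i _ => h0 i _),
    ← Finset.prod_mul_distrib]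
  refine Finset.prod_congr rfl fun i _ => ?_
  rw [withDensity_apply _ (measurableSet_singleton _), lintegral_singleton]

end Density

section Deficiency

variable {X Y X' Y' Θ Θ' : Type*} [MeasurableSpace X] [MeasurableSpace Y] [MeasurableSpace X']
  [MeasurableSpace Y']

/-- Le Cam's one-sided deficiency of the statistical experiment `P` with respect to the
experiment `Q`: the least worst-case total variation error with which a randomized map can turn
an observation from `P θ` into an observation from `Q θ`, without knowing `θ`. -/
noncomputable def deficiency (P : Θ → Measure X) (Q : Θ → Measure Y) : ℝ :=
  ⨅ K : {K : Kernel X Y // IsMarkovKernel K}, ⨆ θ, tvDist (Q θ) ((P θ).bind K.1)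

lemma deficiency_le {P : Θ → Measure X} {Q : Θ → Measure Y} (K : Kernel X Y)
    [hK : IsMarkovKernel K] {c : ℝ} (hc : 0 ≤ c) (h : ∀ θ, tvDist (Q θ) ((P θ).bind K) ≤ c) :
    deficiency P Q ≤ c := by
  refine ciInf_le_of_le ⟨0, ?_⟩ ⟨K, hK⟩ (Real.iSup_le h hc)
  rintro _ ⟨K, rfl⟩
  exact Real.iSup_nonneg fun _ => tvDist_nonneg _ _

lemma le_deficiency [Nonempty Y] {P : Θ → Measure X} {Q : Θ → Measure Y}
    [∀ θ, IsProbabilityMeasure (P θ)] [∀ θ, IsProbabilityMeasure (Q θ)] {c : ℝ}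
    (h : ∀ (K : Kernel X Y) [IsMarkovKernel K] (ε : ℝ), 0 ≤ ε →
      (∀ θ, tvDist (Q θ) ((P θ).bind K) ≤ ε) → c ≤ ε) :
    c ≤ deficiency P Q := by
  have : Nonempty {K : Kernel X Y // IsMarkovKernel K} :=
    ⟨⟨Kernel.const X (Measure.dirac (Classical.arbitrary Y)), inferInstance⟩⟩
  refine le_ciInf fun ⟨K, hK⟩ => h K _ (Real.iSup_nonneg fun _ => tvDist_nonneg _ _) fun θ => ?_
  exact le_ciSup (f := fun θ => tvDist (Q θ) ((P θ).bind K))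
    ⟨1, by rintro _ ⟨θ, rfl⟩; exact tvDist_le_one _ _⟩ θ

variable [Nonempty Y'] {P : Θ → Measure X} {Q : Θ → Measure Y} {P' : Θ' → Measure X'}
  {Q' : Θ' → Measure Y'} [∀ θ, IsProbabilityMeasure (P' θ)] [∀ θ, IsProbabilityMeasure (Q' θ)]

lemma deficiency_le_of_bind (κ : Kernel X X') (η : Kernel Y' Y) [IsMarkovKernel κ]
    [IsMarkovKernel η] (f : Θ → Θ') (hP : ∀ θ, P' (f θ) = (P θ).bind κ)
    (hQ : ∀ θ, Q θ = (Q' (f θ)).bind η) : deficiency P Q ≤ deficiency P' Q' := by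
  refine le_deficiency fun K _ ε hε h => deficiency_le (η ∘ₖ (K ∘ₖ κ)) hε fun θ => ?_
  rw [← Measure.comp_assoc, ← Measure.comp_assoc, ← hP, hQ]
  exact (tvDist_bind_le _ _ η).trans (h (f θ))

lemma deficiency_le_of_map {κ : X → X'} {η : Y' → Y} (hκ : Measurable κ) (hη : Measurable η)
    (f : Θ → Θ') (hP : ∀ θ, P' (f θ) = (P θ).map κ) (hQ : ∀ θ, Q θ = (Q' (f θ)).map η) :
    deficiency P Q ≤ deficiency P' Q' :=
  deficiency_le_of_bind (Kernel.deterministic κ hκ) (Kernel.deterministic η hη) f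
    (fun θ => by rw [hP, Measure.deterministic_comp_eq_map])
    (fun θ => by rw [hQ, Measure.deterministic_comp_eq_map])

end Deficiency

section Poisson

lemma poissonMeasure_mul_eq_withDensity (r t : ℝ≥0) :
    poissonMeasure (r * t) = (poissonMeasure r).withDensity
      fun n => ENNReal.ofReal (Real.exp (r - r * t) * (t : ℝ) ^ n) := by
  refine Measure.ext_of_singleton fun n => ?_
  rw [withDensity_apply _ (measurableSet_singleton n), lintegral_singleton,
    poissonMeasure_singleton, poissonMeasure_singleton, ← ENNReal.ofReal_mul (by positivity)]
  have : Real.exp (-((r * t : ℝ≥0) : ℝ)) = Real.exp (r - r * t) * Real.exp (-r) := by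
    rw [← Real.exp_add]; congr 1; push_cast; ring
  rw [this]
  push_cast
  ring_nf

lemma hasSum_pow_poissonMeasure (r : ℝ≥0) (x : ℝ) :
    HasSum (fun n : ℕ => Real.exp (-r) * (r : ℝ) ^ n / n.factorial * x ^ n)
      (Real.exp (r * (x - 1))) := by
  convert! (NormedSpace.expSeries_div_hasSum_exp ((r : ℝ) * x)).mul_left (Real.exp (-r)) using 1
  · ext n
    rw [mul_pow]
    ring
  · rw [← Real.exp_eq_exp_ℝ, ← Real.exp_add]
    ring_nf

lemma integral_pow_poissonMeasure (r : ℝ≥0) (x : ℝ) :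
    ∫ n : ℕ, x ^ n ∂(poissonMeasure r) = Real.exp (r * (x - 1)) := by
  rw [integral_poissonMeasure]
  exact (hasSum_pow_poissonMeasure r x).tsum_eq

-- The Stein-Chen identity `E[N f(N - 1)] = r E[f(N)]`.
lemma hasSum_mul_pred_poissonMeasure (r : ℝ≥0) (f : ℕ → ℝ) {s : ℝ}
    (h : HasSum (fun n : ℕ => Real.exp (-r) * (r : ℝ) ^ n / n.factorial * f n) s) :
    HasSum (fun n : ℕ => Real.exp (-r) * (r : ℝ) ^ n / n.factorial * (n * f (n - 1))) (r * s) := by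
  rw [← hasSum_nat_add_iff' 1]
  simp only [Finset.range_one, Finset.sum_singleton, Nat.cast_zero, zero_mul, mul_zero, sub_zero]
  convert! h.mul_left (r : ℝ) using 1
  ext n
  rw [Nat.factorial_succ, Nat.add_sub_cancel]
  push_cast
  field_simp
  ring

lemma hasSum_sq_sub_poissonMeasure (r : ℝ≥0) :
    HasSum (fun n : ℕ => Real.exp (-r) * (r : ℝ) ^ n / n.factorial * ((n : ℝ) - r) ^ 2) r := by
  have mass := hasSum_one_poissonMeasure r
  have mean : HasSum (fun n : ℕ => Real.exp (-r) * (r : ℝ) ^ n / n.factorial * n) r := by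
    simpa using hasSum_mul_pred_poissonMeasure r (fun _ => 1) (s := 1) (by simpa using mass)
  have second := hasSum_mul_pred_poissonMeasure r (fun n => (n : ℝ) + 1) (s := r + 1) (by
    simpa only [mul_add, mul_one] using mean.add mass)
  convert! (second.add (mean.mul_left (-2 * (r : ℝ)))).add (mass.mul_left ((r : ℝ) ^ 2)) using 1
  · ext n
    cases n with
    | zero => push_cast; ring
    | succ n => rw [Nat.add_sub_cancel]; push_cast; ring
  · ring

lemma integral_sq_sub_poissonMeasure (r : ℝ≥0) :
    ∫ n : ℕ, ((n : ℝ) - r) ^ 2 ∂(poissonMeasure r) = r := by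
  rw [integral_poissonMeasure]
  exact (hasSum_sq_sub_poissonMeasure r).tsum_eq

lemma integrable_sq_sub_poissonMeasure (r : ℝ≥0) :
    Integrable (fun n : ℕ => ((n : ℝ) - r) ^ 2) (poissonMeasure r) := by
  rw [integrable_poissonMeasure_iff]
  simpa using (hasSum_sq_sub_poissonMeasure r).summable

end Poisson

section PoissonVector

variable {ι : Type*} [Fintype ι]

/-- The law of independent Poisson counts with rates `a`. -/
noncomputable def poissonVec (a : ι → ℝ≥0) : Measure (ι → ℕ) :=
  Measure.pi fun j => poissonMeasure (a j)

instance (a : ι → ℝ≥0) : IsProbabilityMeasure (poissonVec a) := by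
  unfold poissonVec; infer_instance

lemma integral_prod_pow_poissonVec (a : ι → ℝ≥0) (c : ι → ℝ) :
    ∫ x : ι → ℕ, ∏ j, c j ^ x j ∂(poissonVec a) = Real.exp (∑ j, a j * (c j - 1)) := by
  rw [poissonVec, integral_fintype_prod_eq_prod (𝕜 := ℝ) (fun j (n : ℕ) => c j ^ n), Real.exp_sum]
  simp only [integral_pow_poissonMeasure]

lemma poissonVec_conv_poissonVec (a b : ι → ℝ≥0) :
    poissonVec a ∗ poissonVec b = poissonVec (a + b) := by
  rw [Measure.conv, poissonVec, poissonVec,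
    ← (measurePreserving_arrowProdEquivProdArrow ℕ ℕ ι (fun i => poissonMeasure (a i))
      (fun i => poissonMeasure (b i))).map_eq,
    Measure.map_map (by fun_prop) (MeasurableEquiv.measurable _)]
  refine (Measure.pi_map_pi (μ := fun i => (poissonMeasure (a i)).prod (poissonMeasure (b i)))
    (f := fun _ z => z.1 + z.2) (fun i => by fun_prop)).trans ?_
  congr 1
  ext1 i
  exact poissonMeasure_conv_poissonMeasure (a i) (b i)

lemma poissonMeasure_zero : poissonMeasure 0 = Measure.dirac 0 := by
  refine Measure.ext_of_singleton fun n => ?_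
  rcases eq_or_ne n 0 with rfl | hn
  · simp [poissonMeasure_singleton]
  · simp [poissonMeasure_singleton, hn, hn.symm]

lemma poissonVec_zero : poissonVec (0 : ι → ℝ≥0) = Measure.dirac 0 := by
  classical
  refine Measure.pi_eq fun s hs => ?_
  rw [Measure.dirac_apply' _ (MeasurableSet.univ_pi hs)]
  simp only [Pi.zero_apply, poissonMeasure_zero, Measure.dirac_apply' _ (hs _),
    Set.indicator_apply, Set.mem_pi, Set.mem_univ, forall_const, Pi.zero_apply,
    Pi.one_apply, Fintype.prod_ite_zero, Finset.prod_const_one]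

lemma map_sum_pi_poissonVec (L : ℕ) (a : ι → ℝ≥0) :
    (Measure.pi fun _ : Fin L => poissonVec a).map (fun x => ∑ i, x i) = poissonVec (L • a) := by
  classical
  set P := Measure.pi fun _ : Fin L => poissonVec a
  have indep : iIndepFun (fun (i : Fin L) (x : Fin L → ι → ℕ) => x i) P :=
    iIndepFun_pi (X := fun _ => id) fun _ => aemeasurable_id
  have law_sum (s : Finset (Fin L)) :
      P.map (∑ i ∈ s, fun x : Fin L → ι → ℕ => x i) = poissonVec (s.card • a) := by
    induction s using Finset.induction_on with
    | empty =>
      rw [Finset.sum_empty, Finset.card_empty, zero_smul, poissonVec_zero]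
      exact (Measure.map_const P 0).trans (by simp [P])
    | insert i s hi ih =>
      have split : (∑ j ∈ s, fun x : Fin L → ι → ℕ => x j) ⟂ᵢ[P] fun x => x i :=
        indep.indepFun_finsetSum_of_notMem (fun _ => measurable_pi_apply _) hi
      rw [Finset.sum_insert hi, add_comm, split.map_add_eq_map_conv_map .of_discrete .of_discrete,
        ih, (measurePreserving_eval _ i).map_eq, poissonVec_conv_poissonVec,
        Finset.card_insert_of_notMem hi, succ_nsmul]
  convert! law_sum Finset.univ using 2
  · ext x; simp
  · simp

end PoissonVector

section Sufficiency

variable {ι : Type*} [Fintype ι]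

lemma poissonVec_mul_eq_withDensity (r t : ι → ℝ≥0) :
    poissonVec (fun j => r j * t j) = (poissonVec r).withDensity
      fun x => ENNReal.ofReal (∏ j, (Real.exp (r j - r j * t j) * (t j : ℝ) ^ x j)) := by
  simp only [poissonVec, poissonMeasure_mul_eq_withDensity]
  exact pi_withDensity_ofReal _ fun _ _ => by positivity

lemma poissonVec_eq_withDensity (a : ι → ℝ≥0) :
    poissonVec a = (poissonVec (1 : ι → ℝ≥0)).withDensity
      fun x => ENNReal.ofReal (∏ j, (Real.exp (1 - a j) * (a j : ℝ) ^ x j)) := by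
  simpa using poissonVec_mul_eq_withDensity 1 a

lemma pi_poissonVec_eq_withDensity_sum (L : ℕ) (a : ι → ℝ≥0) :
    (Measure.pi fun _ : Fin L => poissonVec a) =
      (Measure.pi fun _ : Fin L => poissonVec (1 : ι → ℝ≥0)).withDensity fun x =>
        ENNReal.ofReal (∏ j, (Real.exp (1 - a j) ^ L * (a j : ℝ) ^ (∑ i, x i) j)) := by
  simp only [poissonVec_eq_withDensity a]
  rw [pi_withDensity_ofReal (fun _ : Fin L => poissonVec (1 : ι → ℝ≥0))
    (fun _ _ => by positivity)]
  congr 1 with x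
  rw [Finset.prod_comm]
  simp only [Finset.prod_mul_distrib, Finset.prod_const, Finset.card_univ, Fintype.card_fin,
    Finset.sum_apply, Finset.prod_pow_eq_pow_sum]

variable (ι) in
lemma exists_kernel_pi_poissonVec_eq_bind (L : ℕ) :
    ∃ κ : Kernel (ι → ℕ) (Fin L → ι → ℕ), IsMarkovKernel κ ∧
      ∀ a : ι → ℝ≥0, (Measure.pi fun _ : Fin L => poissonVec a) = (poissonVec (L • a)).bind κ := by
  refine ⟨condDistrib id (fun x : Fin L → ι → ℕ => ∑ i, x i)
    (Measure.pi fun _ : Fin L => poissonVec (1 : ι → ℝ≥0)), inferInstance, fun a => ?_⟩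
  have hsum : Measurable fun x : Fin L → ι → ℕ => ∑ i, x i := by fun_prop
  let g : (ι → ℕ) → ℝ≥0∞ := fun s =>
    ENNReal.ofReal (∏ j, (Real.exp (1 - a j) ^ L * (a j : ℝ) ^ s j))
  have factor : (Measure.pi fun _ : Fin L => poissonVec a) =
      (Measure.pi fun _ : Fin L => poissonVec (1 : ι → ℝ≥0)).withDensity
        fun x => g (∑ i, x i) := pi_poissonVec_eq_withDensity_sum L a
  rw [← map_sum_pi_poissonVec, factor]
  exact withDensity_comp_eq_bind_condDistrib _ hsum (g := g) .of_discrete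

lemma ampErr_poissonizedModel_eq_deficiency (k n m : ℕ) :
    ampErr (poissonizedModel k) n m =
      deficiency (fun q : {q : Fin k → ℝ≥0 // ∑ j, q j = 1} => poissonVec (n • q.1))
        (fun q => poissonVec ((n + m) • q.1)) := by
  have (L : ℕ) (q : {q : Fin k → ℝ≥0 // ∑ j, q j = 1}) :
      IsProbabilityMeasure (Measure.pi fun _ : Fin L => poissonizedModel k q) :=
    inferInstanceAs (IsProbabilityMeasure (Measure.pi fun _ : Fin L => poissonVec q.1))
  have law_sum (L : ℕ) (q : {q : Fin k → ℝ≥0 // ∑ j, q j = 1}) :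
      poissonVec (L • q.1) = (Measure.pi fun _ : Fin L => poissonizedModel k q).bind
        (Kernel.deterministic (fun x => ∑ i, x i) (by fun_prop)) := by
    rw [Measure.deterministic_comp_eq_map]
    exact (map_sum_pi_poissonVec L q.1).symm
  choose G hG regenerate using fun L => exists_kernel_pi_poissonVec_eq_bind (Fin k) L
  refine le_antisymm ?_ ?_
  · exact deficiency_le_of_bind _ (G (n + m)) id (law_sum n) fun q => regenerate (n + m) q.1
  · exact deficiency_le_of_bind (G n) _ id (fun q => regenerate n q.1) (law_sum (n + m))

end Sufficiency

section Hellinger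

lemma mul_abs_sub_le_hellinger {p q : ℝ} (hp : 0 ≤ p) (hq : 0 ≤ q) (β : ℝ) :
    4 * β * |p - q| ≤ 8 * (p + q - 2 * √(p * q)) + β ^ 2 * (p + q) := by
  rw [Real.sqrt_mul hp]
  obtain ⟨x, hx, rfl⟩ : ∃ x, 0 ≤ x ∧ p = x ^ 2 := ⟨√p, Real.sqrt_nonneg p, (Real.sq_sqrt hp).symm⟩
  obtain ⟨y, hy, rfl⟩ : ∃ y, 0 ≤ y ∧ q = y ^ 2 := ⟨√q, Real.sqrt_nonneg q, (Real.sq_sqrt hq).symm⟩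
  rw [Real.sqrt_sq hx, Real.sqrt_sq hy, sq_sub_sq, abs_mul, abs_of_nonneg (add_nonneg hx hy)]
  nlinarith [sq_nonneg (4 * |x - y| - β * (x + y)), sq_abs (x - y),
    mul_nonneg (sq_nonneg β) (sq_nonneg (x - y))]

lemma tvDist_withDensity_sq_le {X : Type*} [MeasurableSpace X] {μ : Measure X} {p q : X → ℝ}
    (hp : Measurable p) (hq : Measurable q) (hp0 : ∀ x, 0 ≤ p x) (hq0 : ∀ x, 0 ≤ q x)
    [IsProbabilityMeasure (μ.withDensity fun x => ENNReal.ofReal (p x))]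
    [IsProbabilityMeasure (μ.withDensity fun x => ENNReal.ofReal (q x))] :
    tvDist (μ.withDensity fun x => ENNReal.ofReal (p x))
      (μ.withDensity fun x => ENNReal.ofReal (q x)) ^ 2 ≤ 8 * (1 - ∫ x, √(p x * q x) ∂μ) := by
  have hpi : Integrable p μ := integrable_of_isFiniteMeasure_withDensity hp hp0
  have hqi : Integrable q μ := integrable_of_isFiniteMeasure_withDensity hq hq0
  have hsi : Integrable (fun x => √(p x * q x)) μ := by
    refine (hpi.add hqi).mono' (by fun_prop) (Filter.Eventually.of_forall fun x => ?_)
    rw [Real.norm_of_nonneg (Real.sqrt_nonneg _), Pi.add_apply]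
    refine Real.sqrt_le_iff.2 ⟨add_nonneg (hp0 x) (hq0 x), ?_⟩
    nlinarith [hp0 x, hq0 x, mul_nonneg (hp0 x) (hq0 x)]
  have hpqi : Integrable (fun x => p x + q x) μ := hpi.add hqi
  have hdi : Integrable (fun x => p x + q x - 2 * √(p x * q x)) μ := hpqi.sub (hsi.const_mul 2)
  have mass_p : ∫ x, p x ∂μ = 1 := by
    simpa using (integral_withDensity_ofReal (μ := μ) hp hp0 fun _ => 1).symm
  have mass_q : ∫ x, q x ∂μ = 1 := by
    simpa using (integral_withDensity_ofReal (μ := μ) hq hq0 fun _ => 1).symm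
  refine tvDist_sq_le fun A hA => ?_
  rw [measureReal_withDensity_ofReal hp hp0 hA, measureReal_withDensity_ofReal hq hq0 hA,
    ← integral_sub hpi.integrableOn hqi.integrableOn]
  set β := ∫ x, |p x - q x| ∂μ
  have abs_le : |∫ x in A, (p x - q x) ∂μ| ≤ β :=
    abs_integral_le_integral_abs.trans (setIntegral_le_integral (hpi.sub hqi).abs
      (Filter.Eventually.of_forall fun x => abs_nonneg _))
  have hellinger : 4 * β * β ≤ 8 * (2 - 2 * ∫ x, √(p x * q x) ∂μ) + β ^ 2 * 2 := by
    calc 4 * β * β = ∫ x, 4 * β * |p x - q x| ∂μ := by rw [integral_const_mul]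
      _ ≤ ∫ x, (8 * (p x + q x - 2 * √(p x * q x)) + β ^ 2 * (p x + q x)) ∂μ :=
        integral_mono ((hpi.sub hqi).abs.const_mul _)
          ((hdi.const_mul 8).add (hpqi.const_mul _))
          fun x => mul_abs_sub_le_hellinger (hp0 x) (hq0 x) β
      _ = _ := by
        rw [integral_add (hdi.const_mul 8) (hpqi.const_mul _), integral_const_mul,
          integral_const_mul, integral_sub hpqi (hsi.const_mul 2), integral_const_mul,
          integral_add hpi hqi, mass_p, mass_q]
        ring
  rw [← sq_abs]
  nlinarith [abs_nonneg (∫ x in A, (p x - q x) ∂μ)]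

variable {ι : Type*} [Fintype ι]

lemma sqrt_density_mul_density {a b : ℝ} (ha : 0 ≤ a) (hb : 0 ≤ b) (n : ℕ) :
    √(Real.exp (1 - a) * a ^ n * (Real.exp (1 - b) * b ^ n)) =
      Real.exp (1 - (a + b) / 2) * (√a * √b) ^ n := by
  have hexp : Real.exp (1 - a) * Real.exp (1 - b) = Real.exp (1 - (a + b) / 2) ^ 2 := by
    rw [← Real.exp_add, ← Real.exp_nat_mul]
    push_cast
    ring_nf
  have hpow : (a * b) ^ n = ((√a * √b) ^ n) ^ 2 := by
    rw [← pow_mul, mul_comm n, pow_mul, mul_pow (√a), Real.sq_sqrt ha, Real.sq_sqrt hb]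
  rw [mul_mul_mul_comm, hexp, ← mul_pow, hpow, ← mul_pow, Real.sqrt_sq (by positivity)]

lemma integral_sqrt_density_poissonVec (a b : ι → ℝ≥0) :
    ∫ x, √((∏ j, (Real.exp (1 - a j) * (a j : ℝ) ^ x j)) *
        ∏ j, (Real.exp (1 - b j) * (b j : ℝ) ^ x j)) ∂(poissonVec (1 : ι → ℝ≥0)) =
      Real.exp (-(∑ j, (√(a j : ℝ) - √(b j : ℝ)) ^ 2) / 2) := by
  have hsqrt (x : ι → ℕ) : √((∏ j, (Real.exp (1 - a j) * (a j : ℝ) ^ x j)) *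
        ∏ j, (Real.exp (1 - b j) * (b j : ℝ) ^ x j)) =
      (∏ j, Real.exp (1 - (a j + b j) / 2)) * ∏ j, (√(a j : ℝ) * √(b j : ℝ)) ^ x j := by
    rw [← Finset.prod_mul_distrib, ← Finset.prod_mul_distrib,
      Real.sqrt_prod _ fun _ _ => by positivity]
    exact Finset.prod_congr rfl fun j _ => sqrt_density_mul_density (a j).2 (b j).2 (x j)
  simp only [hsqrt, integral_const_mul, integral_prod_pow_poissonVec, ← Real.exp_sum,
    ← Real.exp_add, ← Finset.sum_add_distrib, Pi.one_apply, NNReal.coe_one]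
  rw [neg_div, Finset.sum_div, ← Finset.sum_neg_distrib]
  congr 1
  refine Finset.sum_congr rfl fun j _ => ?_
  linear_combination (1 / 2 : ℝ) * Real.sq_sqrt (a j).coe_nonneg +
    (1 / 2 : ℝ) * Real.sq_sqrt (b j).coe_nonneg

lemma tvDist_poissonVec_sq_le (a b : ι → ℝ≥0) :
    tvDist (poissonVec a) (poissonVec b) ^ 2 ≤ 4 * ∑ j, (√(a j : ℝ) - √(b j : ℝ)) ^ 2 := by
  have (a : ι → ℝ≥0) : IsProbabilityMeasure ((poissonVec (1 : ι → ℝ≥0)).withDensity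
      fun x => ENNReal.ofReal (∏ j, (Real.exp (1 - a j) * (a j : ℝ) ^ x j))) := by
    rw [← poissonVec_eq_withDensity]; infer_instance
  have h := tvDist_withDensity_sq_le (μ := poissonVec (1 : ι → ℝ≥0))
    (p := fun x => ∏ j, (Real.exp (1 - a j) * (a j : ℝ) ^ x j))
    (q := fun x => ∏ j, (Real.exp (1 - b j) * (b j : ℝ) ^ x j))
    .of_discrete .of_discrete (fun _ => by positivity) (fun _ => by positivity)
  rw [← poissonVec_eq_withDensity, ← poissonVec_eq_withDensity,
    integral_sqrt_density_poissonVec] at h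
  linarith [Real.add_one_le_exp (-(∑ j, (√(a j : ℝ) - √(b j : ℝ)) ^ 2) / 2)]

lemma sq_sqrt_sub_sqrt_le {a b : ℝ} (ha : 0 ≤ a) (hb : 0 < b) :
    (√a - √b) ^ 2 ≤ (a - b) ^ 2 / b := by
  rw [le_div_iff₀ hb]
  have factor : a - b = (√a - √b) * (√a + √b) := by
    linear_combination -Real.sq_sqrt ha + Real.sq_sqrt hb.le
  have hle : b ≤ (√a + √b) ^ 2 := by
    nlinarith [Real.sq_sqrt ha, Real.sq_sqrt hb.le, Real.sqrt_nonneg a, Real.sqrt_nonneg b]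
  rw [factor, mul_pow]
  exact mul_le_mul_of_nonneg_left hle (sq_nonneg _)

end Hellinger

section UpperBound

variable {ι : Type*} [Fintype ι]

/-- Adds to an observed vector of counts `x` fresh independent Poisson counts with rates `f x`. -/
noncomputable def addPoisson (f : (ι → ℕ) → ι → ℝ≥0) : Kernel (ι → ℕ) (ι → ℕ) :=
  Kernel.ofFunOfCountable fun x => (poissonVec (f x)).map (x + ·)

lemma addPoisson_apply (f : (ι → ℕ) → ι → ℝ≥0) (x : ι → ℕ) :
    addPoisson f x = (poissonVec (f x)).map (x + ·) := rfl

instance (f : (ι → ℕ) → ι → ℝ≥0) : IsMarkovKernel (addPoisson f) :=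
  ⟨fun x => by rw [addPoisson_apply]; exact Measure.isProbabilityMeasure_map (by fun_prop)⟩

lemma poissonVec_bind_addPoisson_const (a b : ι → ℝ≥0) :
    (poissonVec a).bind (addPoisson fun _ => b) = poissonVec (a + b) := by
  ext A hA
  rw [← poissonVec_conv_poissonVec, Measure.conv, Measure.map_apply (by fun_prop) hA,
    Measure.prod_apply (Set.to_countable _).measurableSet,
    Measure.bind_apply hA (addPoisson fun _ => b).aemeasurable]
  exact lintegral_congr fun x => Measure.map_apply (by fun_prop) hA

variable (ι) in
-- Halve the sample, estimate the rates from the first half and resample on top of the second.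
lemma exists_kernel_bind_eq_bind_addPoisson (t : ℝ≥0) :
    ∃ K : Kernel (ι → ℕ) (ι → ℕ), IsMarkovKernel K ∧ ∀ a : ι → ℝ≥0,
      (poissonVec (2 • a)).bind K =
        (poissonVec a).bind (addPoisson fun x j => a j + t * (x j : ℝ≥0)) := by
  obtain ⟨G, _, split⟩ := exists_kernel_pi_poissonVec_eq_bind ι 2
  let resample : Kernel (Fin 2 → ι → ℕ) (ι → ℕ) := Kernel.ofFunOfCountable fun x =>
    addPoisson (fun _ j => t * (x 0 j : ℝ≥0)) (x 0 + x 1)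
  have : IsMarkovKernel resample := ⟨fun x => inferInstanceAs (IsProbabilityMeasure
    (addPoisson (fun _ j => t * (x 0 j : ℝ≥0)) (x 0 + x 1)))⟩
  refine ⟨resample ∘ₖ G, inferInstance, fun a => Measure.ext fun A hA => ?_⟩
  have resample_apply (x : Fin 2 → ι → ℕ) : resample x A =
      poissonVec (fun j => t * (x 0 j : ℝ≥0)) {w | x 0 + (x 1 + w) ∈ A} := by
    simp only [← add_assoc]
    exact Measure.map_apply (by fun_prop) hA
  rw [← Measure.comp_assoc, ← split, Measure.bind_apply hA resample.aemeasurable,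
    Measure.bind_apply hA (Kernel.aemeasurable _)]
  simp only [resample_apply]
  refine ((measurePreserving_piFinTwo fun _ : Fin 2 => poissonVec a).lintegral_comp
    (f := fun z : (ι → ℕ) × (ι → ℕ) =>
      poissonVec (fun j => t * (z.1 j : ℝ≥0)) {w | z.1 + (z.2 + w) ∈ A}) .of_discrete).trans ?_
  rw [lintegral_prod _ Measurable.of_discrete.aemeasurable]
  refine lintegral_congr fun x => ?_
  rw [addPoisson_apply, Measure.map_apply (by fun_prop) hA]
  change _ = poissonVec (a + fun j => t * (x j : ℝ≥0)) _
  rw [← poissonVec_conv_poissonVec, Measure.conv,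
    Measure.map_apply (by fun_prop) (Set.to_countable _).measurableSet,
    Measure.prod_apply (Set.to_countable _).measurableSet]
  rfl

lemma exists_sq_sqrt_sub_sqrt_le (r t : ℝ≥0) :
    ∃ C : ℝ, C * r ≤ t ^ 2 ∧
      ∀ x : ℕ, (√((r + t * x : ℝ≥0) : ℝ) - √((r + t * r : ℝ≥0) : ℝ)) ^ 2 ≤
        C * ((x : ℝ) - r) ^ 2 := by
  rcases eq_or_ne r 0 with rfl | hr
  · refine ⟨t, by simp, fun x => ?_⟩
    have : (x : ℝ) ≤ (x : ℝ) ^ 2 := by exact_mod_cast Nat.le_self_pow two_ne_zero x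
    simp only [zero_add, mul_zero, NNReal.coe_zero, Real.sqrt_zero, sub_zero]
    rw [Real.sq_sqrt (by positivity)]
    push_cast
    gcongr
  · have : (0 : ℝ) < r := by positivity
    refine ⟨t ^ 2 / r, by field_simp; exact le_rfl, fun x => ?_⟩
    refine (sq_sqrt_sub_sqrt_le (by positivity) (by positivity)).trans ?_
    push_cast
    rw [add_sub_add_left_eq_sub, ← mul_sub, mul_pow, div_mul_eq_mul_div]
    gcongr
    exact le_add_of_nonneg_right (by positivity)

lemma integrable_sq_sub_poissonVec (a : ι → ℝ≥0) (j : ι) :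
    Integrable (fun x : ι → ℕ => ((x j : ℝ) - a j) ^ 2) (poissonVec a) :=
  integrable_comp_eval (μ := fun j => poissonMeasure (a j)) (i := j)
    (integrable_sq_sub_poissonMeasure (a j))

lemma integral_sq_sub_poissonVec (a : ι → ℝ≥0) (j : ι) :
    ∫ x : ι → ℕ, ((x j : ℝ) - a j) ^ 2 ∂(poissonVec a) = a j := by
  rw [poissonVec, integral_comp_eval (μ := fun j => poissonMeasure (a j))
    (f := fun n : ℕ => ((n : ℝ) - a j) ^ 2) Measurable.of_discrete.aestronglyMeasurable,
    integral_sq_sub_poissonMeasure]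

lemma tvDist_bind_addPoisson_sq_le (a : ι → ℝ≥0) (t : ℝ≥0) :
    tvDist ((poissonVec a).bind (addPoisson fun x j => a j + t * (x j : ℝ≥0)))
      ((poissonVec a).bind (addPoisson fun _ j => a j + t * a j)) ^ 2 ≤
        4 * (Fintype.card ι * (t : ℝ) ^ 2) := by
  choose C hCr hC using fun j => exists_sq_sqrt_sub_sqrt_le (a j) t
  have hint (j : ι) : Integrable (fun x : ι → ℕ => C j * ((x j : ℝ) - a j) ^ 2) (poissonVec a) :=
    (integrable_sq_sub_poissonVec a j).const_mul _
  refine (tvDist_bind_bind_sq_le _ _ _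
    ((integrable_finsetSum .univ fun j _ => hint j).const_mul 4) fun x => ?_).trans ?_
  · calc tvDist (addPoisson (fun x j => a j + t * (x j : ℝ≥0)) x)
          (addPoisson (fun _ j => a j + t * a j) x) ^ 2
        ≤ tvDist (poissonVec fun j => a j + t * (x j : ℝ≥0))
            (poissonVec fun j => a j + t * a j) ^ 2 := by
          gcongr
          · exact tvDist_nonneg _ _
          · exact tvDist_map_le _ _ (by fun_prop)
      _ ≤ 4 * ∑ j, (√((a j + t * (x j : ℝ≥0) : ℝ≥0) : ℝ) - √((a j + t * a j : ℝ≥0) : ℝ)) ^ 2 :=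
          tvDist_poissonVec_sq_le _ _
      _ ≤ 4 * ∑ j, C j * ((x j : ℝ) - a j) ^ 2 := by
          gcongr with j
          exact hC j (x j)
  · rw [integral_const_mul, integral_finsetSum _ fun j _ => hint j]
    simp only [integral_const_mul, integral_sq_sub_poissonVec]
    gcongr
    calc ∑ j, C j * (a j : ℝ) ≤ ∑ _j : ι, (t : ℝ) ^ 2 := Finset.sum_le_sum fun j _ => hCr j
      _ = Fintype.card ι * (t : ℝ) ^ 2 := by simp

end UpperBound

section UpperBoundRates

lemma ampErr_poissonizedModel_le_of_le_sqrt {n m k : ℕ} (hn : 1 ≤ n)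
    (h : (m : ℝ) ≤ 1 / 40 * √n) : ampErr (poissonizedModel k) n m ≤ 0.1 := by
  rw [ampErr_poissonizedModel_eq_deficiency]
  refine deficiency_le Kernel.id (by norm_num) fun q => ?_
  rw [Measure.id_comp, tvDist_comm]
  refine le_of_sq_le_sq ((tvDist_poissonVec_sq_le _ _).trans ?_) (by norm_num)
  have hn0 : (0 : ℝ) < n := by exact_mod_cast hn
  have root_sub : (√n - √(n + m)) ^ 2 ≤ 1 / 1600 := by
    rw [← neg_sub, neg_sq]
    refine (sq_sqrt_sub_sqrt_le (by positivity) hn0).trans ?_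
    rw [add_sub_cancel_left, div_le_iff₀ hn0]
    calc (m : ℝ) ^ 2 ≤ (1 / 40 * √n) ^ 2 := by gcongr
      _ = 1 / 1600 * (n : ℝ) := by rw [mul_pow, Real.sq_sqrt hn0.le]; norm_num
  have total : ∑ j, (q.1 j : ℝ) = 1 := by exact_mod_cast congrArg NNReal.toReal q.2
  calc 4 * ∑ j, (√((n • q.1) j : ℝ≥0) - √(((n + m) • q.1) j : ℝ≥0)) ^ 2
      = 4 * ((√n - √(n + m)) ^ 2 * ∑ j, (q.1 j : ℝ)) := by
        rw [Finset.mul_sum (a := (√n - √(n + m)) ^ 2)]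
        congr 1
        refine Finset.sum_congr rfl fun j _ => ?_
        simp only [Pi.smul_apply, nsmul_eq_mul, NNReal.coe_mul, NNReal.coe_natCast, Nat.cast_add,
          NNReal.coe_add]
        rw [Real.sqrt_mul (by positivity), Real.sqrt_mul (by positivity), ← sub_mul, mul_pow,
          Real.sq_sqrt (by positivity)]
    _ ≤ 0.1 ^ 2 := by rw [total]; linarith

lemma ampErr_poissonizedModel_le_of_le_div_sqrt {n m k : ℕ} (hn : 1 ≤ n) (hk : 1 ≤ k)
    (h : (m : ℝ) ≤ 1 / 40 * (n / √k)) : ampErr (poissonizedModel k) n m ≤ 0.1 := by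
  have hn0 : (0 : ℝ) < n := by exact_mod_cast hn
  have : (0 : ℝ≥0) < n := by exact_mod_cast hn
  have hk0 : (0 : ℝ) < k := by exact_mod_cast hk
  obtain ⟨K, _, hK⟩ := exists_kernel_bind_eq_bind_addPoisson (Fin k) (2 * m / n : ℝ≥0)
  rw [ampErr_poissonizedModel_eq_deficiency]
  refine deficiency_le K (by norm_num) fun q => ?_
  have source : n • q.1 = 2 • ((n / 2 : ℝ≥0) • q.1) := by
    ext j
    simp only [Pi.smul_apply, nsmul_eq_mul, smul_eq_mul]
    push_cast
    ring
  have target : (n + m) • q.1 = (n / 2 : ℝ≥0) • q.1 + fun j => ((n / 2 : ℝ≥0) • q.1) j +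
      (2 * m / n : ℝ≥0) * ((n / 2 : ℝ≥0) • q.1) j := by
    ext j
    simp only [Pi.smul_apply, Pi.add_apply, nsmul_eq_mul, smul_eq_mul]
    push_cast
    field_simp
    ring
  rw [source, hK, target, ← poissonVec_bind_addPoisson_const, tvDist_comm]
  refine le_of_sq_le_sq ((tvDist_bind_addPoisson_sq_le _ _).trans ?_) (by norm_num)
  have ratio : (2 * m / n : ℝ) ≤ 1 / 20 * (1 / √k) := by
    rw [div_le_iff₀ hn0]
    linarith [show 1 / 20 * (1 / √k) * n = 2 * (1 / 40 * (n / √k)) by ring]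
  simp only [Fintype.card_fin, NNReal.coe_div, NNReal.coe_mul, NNReal.coe_natCast,
    NNReal.coe_ofNat]
  calc 4 * (k * (2 * m / n : ℝ) ^ 2) ≤ 4 * (k * (1 / 20 * (1 / √k)) ^ 2) := by gcongr
    _ = 0.1 ^ 2 := by
      rw [mul_pow, div_pow 1 (√k), Real.sq_sqrt hk0.le]
      field_simp
      norm_num

lemma ampErr_poissonizedModel_le {n m k : ℕ} (hn : 1 ≤ n) (hk : 1 ≤ k)
    (h : (m : ℝ) ≤ 1 / 80 * (n / √k + √n)) : ampErr (poissonizedModel k) n m ≤ 0.1 := by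
  rcases le_total ((n : ℝ) / √k) (√n) with hle | hle
  · exact ampErr_poissonizedModel_le_of_le_sqrt hn (by linarith)
  · exact ampErr_poissonizedModel_le_of_le_div_sqrt hn hk (by linarith)

end UpperBoundRates

section SignTesting

variable {ι : Type*} [Fintype ι]

section ProductMoments

variable {Ω : Type*} [MeasurableSpace Ω] {X : ι → Ω → ℝ} {a b : ℝ}

lemma integral_sum_eval (μ : ι → Measure Ω) [∀ i, IsProbabilityMeasure (μ i)]
    (hX : ∀ i, Measurable (X i)) (h : ∀ i ω, X i ω ∈ Set.Icc a b) :
    ∫ ω, ∑ i, X i (ω i) ∂(Measure.pi μ) = ∑ i, ∫ x, X i x ∂(μ i) := by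
  rw [integral_finsetSum _ fun i _ => integrable_comp_eval (integrable_of_mem_Icc (hX i) (h i))]
  exact Finset.sum_congr rfl fun i _ => integral_comp_eval (hX i).aestronglyMeasurable

lemma integral_sq_sum_eval_sub_le (μ : ι → Measure Ω) [∀ i, IsProbabilityMeasure (μ i)]
    (hX : ∀ i, Measurable (X i)) (h : ∀ i ω, X i ω ∈ Set.Icc a b) (c : ℝ) :
    ∫ ω, (∑ i, X i (ω i) - c) ^ 2 ∂(Measure.pi μ) ≤
      (∑ i, ∫ x, X i x ∂(μ i) - c) ^ 2 + Fintype.card ι * ((b - a) / 2) ^ 2 := by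
  have hL2 (i : ι) : MemLp (X i) 2 (μ i) :=
    memLp_of_bounded (Filter.Eventually.of_forall (h i)) (hX i).aestronglyMeasurable 2
  have hS : MemLp (fun ω : ι → Ω => ∑ i, X i (ω i)) 2 (Measure.pi μ) :=
    memLp_finsetSum _ fun i _ => (hL2 i).comp_measurePreserving (measurePreserving_eval μ i)
  have var_le : Var[fun ω : ι → Ω => ∑ i, X i (ω i) - c; Measure.pi μ] ≤
      Fintype.card ι * ((b - a) / 2) ^ 2 := by
    rw [variance_sub_const hS.aestronglyMeasurable]
    calc Var[fun ω : ι → Ω => ∑ i, X i (ω i); Measure.pi μ] = ∑ i, Var[X i; μ i] := by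
          rw [← variance_sum_pi hL2]
          congr 1 with ω
          rw [Finset.sum_apply]
      _ ≤ ∑ _i : ι, ((b - a) / 2) ^ 2 := Finset.sum_le_sum fun i _ =>
          variance_le_sq_of_bounded (Filter.Eventually.of_forall (h i)) (hX i).aemeasurable
      _ = Fintype.card ι * ((b - a) / 2) ^ 2 := by simp
  have hSc : MemLp (fun ω : ι → Ω => ∑ i, X i (ω i) - c) 2 (Measure.pi μ) :=
    hS.sub (memLp_const c)
  rw [variance_eq_sub hSc] at var_le
  have mean : ∫ ω, (∑ i, X i (ω i) - c) ∂(Measure.pi μ) = ∑ i, ∫ x, X i x ∂(μ i) - c := by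
    rw [integral_sub (hS.integrable one_le_two) (integrable_const _), integral_sum_eval μ hX h]
    simp
  simp only [Pi.pow_apply] at var_le
  rw [mean] at var_le
  linarith

end ProductMoments

section Clip

/-- Truncation of a real number to `[-l, l]`. -/
noncomputable def clip (l t : ℝ) : ℝ := max (-l) (min l t)

lemma clip_mem_Icc {l : ℝ} (hl : 0 ≤ l) (t : ℝ) : clip l t ∈ Set.Icc (-l) l :=
  ⟨le_max_left _ _, max_le (by linarith) (min_le_left _ _)⟩

lemma clip_mono (l : ℝ) : Monotone (clip l) := fun _ _ h =>
  max_le_max le_rfl (min_le_min le_rfl h)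

lemma clip_le_add_sq_div {l : ℝ} (hl : 0 < l) (t : ℝ) : clip l t ≤ t + t ^ 2 / (4 * l) := by
  refine max_le ?_ ((min_le_right _ _).trans (le_add_of_nonneg_right (by positivity)))
  have complete_square : t + t ^ 2 / (4 * l) = (t + 2 * l) ^ 2 / (4 * l) - l := by
    field_simp; ring
  have : 0 ≤ (t + 2 * l) ^ 2 / (4 * l) := by positivity
  linarith

lemma sub_sq_div_le_clip {l : ℝ} (hl : 0 < l) (t : ℝ) : t - t ^ 2 / (4 * l) ≤ clip l t := by
  refine le_trans (le_min ?_ (sub_le_self _ (by positivity))) (le_max_right _ _)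
  have complete_square : t - t ^ 2 / (4 * l) = l - (t - 2 * l) ^ 2 / (4 * l) := by
    field_simp; ring
  rw [complete_square]
  exact sub_le_self _ (by positivity)

end Clip

section SignLaw

/-- The real sign encoded by a Boolean. -/
def boolSign (b : Bool) : ℝ := if b then 1 else -1

lemma abs_boolSign_mul_le_one {a : ℝ} (ha : |a| ≤ 1) (b : Bool) : |boolSign b * a| ≤ 1 := by
  cases b <;> simpa [boolSign] using ha

/-- The law of a random sign with mean `a ∈ [-1, 1]`. -/
noncomputable def signLaw (a : ℝ) : Measure Bool :=
  Measure.count.withDensity fun b => ENNReal.ofReal ((1 + boolSign b * a) / 2)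

lemma sign_density_nonneg {a : ℝ} (ha : |a| ≤ 1) (b : Bool) : 0 ≤ (1 + boolSign b * a) / 2 := by
  linarith [(abs_le.1 (abs_boolSign_mul_le_one ha b)).1]

lemma signLaw_singleton (a : ℝ) (b : Bool) :
    signLaw a {b} = ENNReal.ofReal ((1 + boolSign b * a) / 2) := by
  rw [signLaw, withDensity_apply _ (measurableSet_singleton b), lintegral_singleton,
    Measure.count_singleton, mul_one]

lemma isProbabilityMeasure_signLaw {a : ℝ} (ha : |a| ≤ 1) : IsProbabilityMeasure (signLaw a) := by
  refine isProbabilityMeasure_withDensity_ofReal .of_finite (sign_density_nonneg ha) ?_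
  rw [integral_fintype .of_finite]
  simp only [Measure.real, Measure.count_singleton, Fintype.sum_bool, boolSign]
  norm_num
  ring

lemma integral_boolSign_signLaw {a : ℝ} (ha : |a| ≤ 1) : ∫ b, boolSign b ∂(signLaw a) = a := by
  rw [signLaw, integral_withDensity_ofReal .of_discrete (sign_density_nonneg ha),
    integral_fintype .of_finite]
  simp only [Measure.real, Measure.count_singleton, Fintype.sum_bool, boolSign]
  norm_num
  ring

lemma integral_pi_signLaw {a : ι → ℝ} (ha : ∀ j, |a j| ≤ 1) [DecidableEq ι]
    (f : (ι → Bool) → ℝ) :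
    ∫ s, f s ∂(Measure.pi fun j => signLaw (a j)) =
      ∑ s, (∏ j, (1 + boolSign (s j) * a j) / 2) * f s := by
  have (j : ι) := isProbabilityMeasure_signLaw (ha j)
  rw [integral_fintype .of_finite]
  refine Finset.sum_congr rfl fun s _ => ?_
  rw [Measure.real, Measure.pi_singleton, ENNReal.toReal_prod, smul_eq_mul]
  congr 1
  refine Finset.prod_congr rfl fun j _ => ?_
  rw [signLaw_singleton, ENNReal.toReal_ofReal (sign_density_nonneg (ha j) _)]

/-- The Gaussian-type log-likelihood of the sign vector `s` as a function of an estimate `a` of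
its posterior mean. In expectation over independent signs it is maximal when `a` is the vector of
true means. -/
noncomputable def signScore (s : ι → Bool) (a : ι → ℝ) : ℝ :=
  ∑ j, (boolSign (s j) * a j - a j ^ 2 / 2)

lemma measurable_clip_signScore_sub {Y : Type*} [MeasurableSpace Y] (l : ℝ) (s : ι → Bool)
    {a : Y → ι → ℝ} (ha : Measurable a) (c : ℝ) :
    Measurable fun y => clip l (signScore s (a y) - c) := by
  unfold clip signScore
  fun_prop

lemma signScore_le (s : ι → Bool) (h a : ι → ℝ) :
    signScore s a ≤ ∑ j, boolSign (s j) * a j - (∑ j, h j * a j - ∑ j, h j ^ 2 / 2) := by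
  rw [signScore, ← Finset.sum_sub_distrib, ← Finset.sum_sub_distrib]
  exact Finset.sum_le_sum fun j _ => by linarith [sq_nonneg (h j - a j)]

lemma signScore_self (s : ι → Bool) (h : ι → ℝ) :
    signScore s h = ∑ j, boolSign (s j) * h j - (∑ j, h j * h j - ∑ j, h j ^ 2 / 2) := by
  rw [signScore, ← Finset.sum_sub_distrib, ← Finset.sum_sub_distrib]
  exact Finset.sum_congr rfl fun j _ => by ring

section SignScore

variable {h a : ι → ℝ} (hh : ∀ j, |h j| ≤ 1) (ha : ∀ j, |a j| ≤ 1)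
include hh ha

lemma integral_sum_boolSign_mul_sub (c : ℝ) :
    ∫ s, (∑ j, boolSign (s j) * a j - c) ∂(Measure.pi fun j => signLaw (h j)) =
      ∑ j, h j * a j - c := by
  have (j : ι) := isProbabilityMeasure_signLaw (hh j)
  rw [integral_sub .of_finite .of_finite, integral_sum_eval (X := fun j b => boolSign b * a j) _
    (fun _ => .of_discrete) fun j b => abs_le.1 (abs_boolSign_mul_le_one (ha j) b)]
  simp only [integral_mul_const, integral_boolSign_signLaw (hh _), integral_const, probReal_univ,
    one_smul]

lemma integral_sq_sum_boolSign_mul_sub_le (c : ℝ) :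
    ∫ s, (∑ j, boolSign (s j) * a j - c) ^ 2 ∂(Measure.pi fun j => signLaw (h j)) ≤
      (∑ j, h j * a j - c) ^ 2 + Fintype.card ι := by
  have (j : ι) := isProbabilityMeasure_signLaw (hh j)
  refine (integral_sq_sum_eval_sub_le (X := fun j b => boolSign b * a j) _
    (fun _ => .of_discrete) (fun j b => abs_le.1 (abs_boolSign_mul_le_one (ha j) b)) c).trans ?_
  simp only [integral_mul_const, integral_boolSign_signLaw (hh _)]
  norm_num

variable {l : ℝ} (hl : 0 < l)
include hl

lemma integral_clip_signScore_le (c : ℝ) :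
    ∫ s, clip l (signScore s a - c) ∂(Measure.pi fun j => signLaw (h j)) ≤
      (∑ j, h j ^ 2 / 2 - c) + ((∑ j, h j ^ 2 / 2 - c) ^ 2 + Fintype.card ι) / (4 * l) := by
  have (j : ι) := isProbabilityMeasure_signLaw (hh j)
  let c' := ∑ j, h j * a j - ∑ j, h j ^ 2 / 2 + c
  have center : ∑ j, h j * a j - c' = ∑ j, h j ^ 2 / 2 - c := by ring
  calc ∫ s, clip l (signScore s a - c) ∂(Measure.pi fun j => signLaw (h j))
      ≤ ∫ s, ((∑ j, boolSign (s j) * a j - c') + (∑ j, boolSign (s j) * a j - c') ^ 2 / (4 * l))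
          ∂(Measure.pi fun j => signLaw (h j)) :=
        integral_mono .of_finite .of_finite fun s => (clip_mono l
          (by linarith [signScore_le s h a])).trans (clip_le_add_sq_div hl _)
    _ = (∑ j, h j * a j - c') + (∫ s, (∑ j, boolSign (s j) * a j - c') ^ 2
          ∂(Measure.pi fun j => signLaw (h j))) / (4 * l) := by
        rw [integral_add .of_finite .of_finite, integral_div, integral_sum_boolSign_mul_sub hh ha]
    _ ≤ (∑ j, h j * a j - c') + ((∑ j, h j * a j - c') ^ 2 + Fintype.card ι) / (4 * l) := by
        gcongr
        exact integral_sq_sum_boolSign_mul_sub_le hh ha c'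
    _ = _ := by rw [center]

end SignScore

lemma le_integral_clip_signScore {h : ι → ℝ} (hh : ∀ j, |h j| ≤ 1) {l : ℝ} (hl : 0 < l) (c : ℝ) :
    (∑ j, h j ^ 2 / 2 - c) - ((∑ j, h j ^ 2 / 2 - c) ^ 2 + Fintype.card ι) / (4 * l) ≤
      ∫ s, clip l (signScore s h - c) ∂(Measure.pi fun j => signLaw (h j)) := by
  have (j : ι) := isProbabilityMeasure_signLaw (hh j)
  let c' := ∑ j, h j * h j - ∑ j, h j ^ 2 / 2 + c
  have center : ∑ j, h j * h j - c' = ∑ j, h j ^ 2 / 2 - c := by ring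
  calc (∑ j, h j ^ 2 / 2 - c) - ((∑ j, h j ^ 2 / 2 - c) ^ 2 + Fintype.card ι) / (4 * l)
      = (∑ j, h j * h j - c') - ((∑ j, h j * h j - c') ^ 2 + Fintype.card ι) / (4 * l) := by
        rw [center]
    _ ≤ (∑ j, h j * h j - c') - (∫ s, (∑ j, boolSign (s j) * h j - c') ^ 2
          ∂(Measure.pi fun j => signLaw (h j))) / (4 * l) := by
        gcongr
        exact integral_sq_sum_boolSign_mul_sub_le hh hh c'
    _ = ∫ s, ((∑ j, boolSign (s j) * h j - c') - (∑ j, boolSign (s j) * h j - c') ^ 2 / (4 * l))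
          ∂(Measure.pi fun j => signLaw (h j)) := by
        rw [integral_sub .of_finite .of_finite, integral_div, integral_sum_boolSign_mul_sub hh hh]
    _ ≤ ∫ s, clip l (signScore s h - c) ∂(Measure.pi fun j => signLaw (h j)) :=
        integral_mono .of_finite .of_finite fun s => (sub_sq_div_le_clip hl _).trans
          (clip_mono l (by linarith [signScore_self s h]))

lemma integral_integral_clip_signScore_le {Y : Type*} [MeasurableSpace Y] (ν : Measure Y)
    [IsProbabilityMeasure ν] {h : ι → ℝ} (hh : ∀ j, |h j| ≤ 1) {a : Y → ι → ℝ}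
    (ha : Measurable a) (ha1 : ∀ y j, |a y j| ≤ 1) {l : ℝ} (hl : 0 < l) (c : ℝ) :
    ∫ s, ∫ y, clip l (signScore s (a y) - c) ∂ν ∂(Measure.pi fun j => signLaw (h j)) ≤
      (∑ j, h j ^ 2 / 2 - c) + ((∑ j, h j ^ 2 / 2 - c) ^ 2 + Fintype.card ι) / (4 * l) := by
  have (j : ι) := isProbabilityMeasure_signLaw (hh j)
  have hint : Integrable (fun p : (ι → Bool) × Y => clip l (signScore p.1 (a p.2) - c))
      ((Measure.pi fun j => signLaw (h j)).prod ν) :=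
    integrable_of_mem_Icc (measurable_from_prod_countable_right fun s =>
      measurable_clip_signScore_sub l s ha c) fun p => clip_mem_Icc hl.le _
  rw [integral_integral_swap hint]
  refine (integral_mono hint.integral_prod_right (integrable_const _) fun y =>
    integral_clip_signScore_le hh (ha1 y) hl c).trans_eq ?_
  rw [integral_const, probReal_univ, one_smul]

end SignLaw

/-- A pair of probability laws on `V`, presented by their uniform mixture `mix` and
the posterior mean `post` of the uniform random sign which selects between them. -/
structure BinaryExperiment (V : Type*) [MeasurableSpace V] where
  mix : Measure V
  [isProbabilityMeasure_mix : IsProbabilityMeasure mix]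
  post : V → ℝ
  abs_post_le_one : ∀ v, |post v| ≤ 1
  integral_post : ∫ v, post v ∂mix = 0

namespace BinaryExperiment

variable {V W : Type*} [MeasurableSpace V] [MeasurableSpace W]

attribute [instance] isProbabilityMeasure_mix

/-- The law of the observation when the sign is `b`. -/
noncomputable def law (E : BinaryExperiment V) (b : Bool) : Measure V :=
  E.mix.withDensity fun v => ENNReal.ofReal (1 + boolSign b * E.post v)

/-- The variance of the posterior mean, a measure of the information which the observation
carries about the sign. -/
noncomputable def info (E : BinaryExperiment V) : ℝ := ∫ v, E.post v ^ 2 ∂E.mix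

lemma law_density_nonneg (E : BinaryExperiment V) (b : Bool) (v : V) :
    0 ≤ 1 + boolSign b * E.post v := by
  linarith [(abs_le.1 (abs_boolSign_mul_le_one (E.abs_post_le_one v) b)).1]

lemma sq_post_div_two_mem_Icc (E : BinaryExperiment V) (v : V) :
    E.post v ^ 2 / 2 ∈ Set.Icc (0 : ℝ) (1 / 2) :=
  ⟨by positivity, by linarith [(sq_le_one_iff_abs_le_one _).2 (E.abs_post_le_one v)]⟩

variable [Countable V] [MeasurableSingletonClass V] [Countable W] [MeasurableSingletonClass W]

instance (E : BinaryExperiment V) (b : Bool) : IsProbabilityMeasure (E.law b) := by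
  have hpost : Integrable (fun v => boolSign b * E.post v) E.mix :=
    integrable_of_mem_Icc .of_discrete
      fun v => abs_le.1 (abs_boolSign_mul_le_one (E.abs_post_le_one v) b)
  refine isProbabilityMeasure_withDensity_ofReal ((integrable_const 1).add hpost)
    (E.law_density_nonneg b) ?_
  rw [integral_add (integrable_const 1) hpost, integral_const_mul, E.integral_post]
  simp

lemma integral_pi_law (E : BinaryExperiment V) (s : ι → Bool) (f : (ι → V) → ℝ) :
    ∫ x, f x ∂(Measure.pi fun j => E.law (s j)) =
      ∫ x, (∏ j, (1 + boolSign (s j) * E.post (x j))) * f x ∂(Measure.pi fun _ : ι => E.mix) := by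
  unfold law
  rw [pi_withDensity_ofReal _ fun j v => E.law_density_nonneg (s j) v]
  exact integral_withDensity_ofReal .of_discrete
    (fun x => Finset.prod_nonneg fun j _ => E.law_density_nonneg (s j) (x j)) f

-- Bayes: uniform signs followed by the observation is the observation followed by its posterior.
lemma sum_integral_pi_law [DecidableEq ι] (E : BinaryExperiment V)
    {f : (ι → Bool) → (ι → V) → ℝ} {a b : ℝ} (hf : ∀ s x, f s x ∈ Set.Icc a b) :
    ∑ s, ∫ x, f s x ∂(Measure.pi fun j => E.law (s j)) =
      2 ^ Fintype.card ι * ∫ x, ∫ s, f s x ∂(Measure.pi fun j => signLaw (E.post (x j)))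
        ∂(Measure.pi fun _ : ι => E.mix) := by
  have density_mem (s : ι → Bool) (x : ι → V) :
      ∏ j, (1 + boolSign (s j) * E.post (x j)) / 2 ∈ Set.Icc (0 : ℝ) 1 := by
    have h (j : ι) := abs_le.1 (abs_boolSign_mul_le_one (E.abs_post_le_one (x j)) (s j))
    exact ⟨Finset.prod_nonneg fun j _ => by linarith [(h j).1],
      Finset.prod_le_one (fun j _ => by linarith [(h j).1]) fun j _ => by linarith [(h j).2]⟩
  have hint (s : ι → Bool) : Integrable (fun x : ι → V =>
      (∏ j, (1 + boolSign (s j) * E.post (x j)) / 2) * f s x) (Measure.pi fun _ : ι => E.mix) :=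
    (integrable_of_mem_Icc .of_discrete (hf s)).bdd_mul (c := 1)
      Measurable.of_discrete.aestronglyMeasurable (Filter.Eventually.of_forall fun x => by
        rw [Real.norm_of_nonneg (density_mem s x).1]; exact (density_mem s x).2)
  simp only [integral_pi_signLaw fun _ => E.abs_post_le_one _, integral_pi_law]
  rw [integral_finsetSum _ fun s _ => hint s, Finset.mul_sum]
  refine Finset.sum_congr rfl fun s _ => ?_
  rw [← integral_const_mul]
  refine integral_congr_ae (Filter.Eventually.of_forall fun x => ?_)
  simp only [Finset.prod_div_distrib, Finset.prod_const, Finset.card_univ]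
  field_simp

section Moments

variable (ι) (E : BinaryExperiment V) (c : ℝ)

lemma memLp_sum_sq_post_sub :
    MemLp (fun x : ι → V => ∑ j, E.post (x j) ^ 2 / 2 - c) 2 (Measure.pi fun _ => E.mix) := by
  refine MemLp.sub (memLp_finsetSum _ fun j _ => ?_) (memLp_const c)
  exact memLp_of_bounded
    (Filter.Eventually.of_forall fun x : ι → V => E.sq_post_div_two_mem_Icc (x j))
    Measurable.of_discrete.aestronglyMeasurable 2

lemma integral_sum_sq_post_sub :
    ∫ x : ι → V, (∑ j, E.post (x j) ^ 2 / 2 - c) ∂(Measure.pi fun _ => E.mix) =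
      Fintype.card ι * E.info / 2 - c := by
  have hsum := (memLp_sum_sq_post_sub ι E 0).integrable one_le_two
  simp only [sub_zero] at hsum
  rw [integral_sub hsum (integrable_const _), integral_sum_eval (X := fun _ v => E.post v ^ 2 / 2) _
    (fun _ => .of_discrete) fun _ => E.sq_post_div_two_mem_Icc]
  simp [integral_div, info, mul_div_assoc]

variable (l : ℝ)

lemma integrable_sq_sum_sq_post_sub_add_div :
    Integrable (fun x : ι → V =>
      ((∑ j, E.post (x j) ^ 2 / 2 - c) ^ 2 + Fintype.card ι) / (4 * l))
      (Measure.pi fun _ => E.mix) :=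
  ((memLp_sum_sq_post_sub ι E c).integrable_sq.add (integrable_const _)).div_const _

variable {l} in
lemma integral_sq_sum_sq_post_sub_add_div_le (hl : 0 < l) :
    ∫ x : ι → V, ((∑ j, E.post (x j) ^ 2 / 2 - c) ^ 2 + Fintype.card ι) / (4 * l)
        ∂(Measure.pi fun _ => E.mix) ≤
      ((Fintype.card ι * E.info / 2 - c) ^ 2 + 5 / 4 * Fintype.card ι) / (4 * l) := by
  have sq_le := integral_sq_sum_eval_sub_le (X := fun (_ : ι) v => E.post v ^ 2 / 2)
    (fun _ => E.mix) (fun _ => .of_discrete) (fun _ => E.sq_post_div_two_mem_Icc) c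
  simp only [integral_div, Finset.sum_const, Finset.card_univ, nsmul_eq_mul, ← mul_div_assoc]
    at sq_le
  rw [integral_div, integral_add (memLp_sum_sq_post_sub ι E c).integrable_sq (integrable_const _),
    integral_const, probReal_univ, one_smul, info]
  refine div_le_div_of_nonneg_right ?_ (by positivity)
  linarith [Nat.cast_nonneg (α := ℝ) (Fintype.card ι)]

end Moments

lemma integrable_integral_pi_signLaw (E : BinaryExperiment V) {f : (ι → Bool) → (ι → V) → ℝ}
    {a b : ℝ} (hf : ∀ s x, f s x ∈ Set.Icc a b) :
    Integrable (fun x => ∫ s, f s x ∂(Measure.pi fun j => signLaw (E.post (x j))))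
      (Measure.pi fun _ => E.mix) := by
  refine integrable_of_mem_Icc (a := a) (b := b) .of_discrete fun x => ?_
  have (j : ι) := isProbabilityMeasure_signLaw (E.abs_post_le_one (x j))
  exact (convex_Icc a b).integral_mem isClosed_Icc (Filter.Eventually.of_forall fun s => hf s x)
    .of_finite

section Score

variable [DecidableEq ι] (E : BinaryExperiment V) {l : ℝ} (hl : 0 < l) (c : ℝ)
include hl

lemma le_sum_integral_clip_signScore_post :
    2 ^ Fintype.card ι * ((Fintype.card ι * E.info / 2 - c) -
        ((Fintype.card ι * E.info / 2 - c) ^ 2 + 5 / 4 * Fintype.card ι) / (4 * l)) ≤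
      ∑ s : ι → Bool, ∫ x, clip l (signScore s (fun j => E.post (x j)) - c)
        ∂(Measure.pi fun j => E.law (s j)) := by
  have hR := (memLp_sum_sq_post_sub ι E c).integrable one_le_two
  have hR2 := integrable_sq_sum_sq_post_sub_add_div ι E c l
  rw [E.sum_integral_pi_law fun s x => clip_mem_Icc hl.le _]
  refine mul_le_mul_of_nonneg_left ?_ (by positivity)
  refine le_trans ?_ (integral_mono (hR.sub hR2)
    (integrable_integral_pi_signLaw E fun s x => clip_mem_Icc hl.le _)
    fun x => le_integral_clip_signScore (fun j => E.abs_post_le_one (x j)) hl c)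
  rw [integral_sub' hR hR2, integral_sum_sq_post_sub]
  gcongr
  exact integral_sq_sum_sq_post_sub_add_div_le ι E c hl

lemma sum_integral_clip_signScore_bind_le {Y : Type*} [MeasurableSpace Y] (K : Kernel (ι → V) Y)
    [IsMarkovKernel K] {a : Y → ι → ℝ} (ha : Measurable a) (ha1 : ∀ y j, |a y j| ≤ 1) :
    ∑ s : ι → Bool, ∫ y, clip l (signScore s (a y) - c) ∂((Measure.pi fun j => E.law (s j)).bind K)
      ≤ 2 ^ Fintype.card ι * ((Fintype.card ι * E.info / 2 - c) +
        ((Fintype.card ι * E.info / 2 - c) ^ 2 + 5 / 4 * Fintype.card ι) / (4 * l)) := by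
  have hR := (memLp_sum_sq_post_sub ι E c).integrable one_le_two
  have hR2 := integrable_sq_sum_sq_post_sub_add_div ι E c l
  have hint (s : ι → Bool) (μ : Measure Y) [IsFiniteMeasure μ] :
      Integrable (fun y => clip l (signScore s (a y) - c)) μ :=
    integrable_of_mem_Icc (measurable_clip_signScore_sub l s ha c) fun y => clip_mem_Icc hl.le _
  have hKmem (s : ι → Bool) (x : ι → V) :
      ∫ y, clip l (signScore s (a y) - c) ∂K x ∈ Set.Icc (-l) l :=
    (convex_Icc _ _).integral_mem isClosed_Icc
      (Filter.Eventually.of_forall fun y => clip_mem_Icc hl.le _) (hint s _)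
  simp only [integral_bind_kernel _ K (hint _ _)]
  rw [E.sum_integral_pi_law hKmem]
  refine mul_le_mul_of_nonneg_left ?_ (by positivity)
  refine (integral_mono (integrable_integral_pi_signLaw E hKmem) (hR.add hR2) fun x =>
    integral_integral_clip_signScore_le (K x) (fun j => E.abs_post_le_one (x j)) ha ha1 hl c).trans
    ?_
  rw [integral_add' hR hR2, integral_sum_sq_post_sub]
  gcongr
  exact integral_sq_sum_sq_post_sub_add_div_le ι E c hl

end Score

section Deficiency

variable {E : BinaryExperiment V} {F : BinaryExperiment W}

lemma info_gap_le_of_tvDist_le {K : Kernel (ι → V) (ι → W)} [IsMarkovKernel K] {ε l D : ℝ}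
    (hD : Fintype.card ι * (F.info - E.info) / 2 = D) (hl : 0 < l)
    (hε : ∀ s : ι → Bool, tvDist (Measure.pi fun j => F.law (s j))
      ((Measure.pi fun j => E.law (s j)).bind K) ≤ ε) :
    D - (D ^ 2 + 5 / 2 * Fintype.card ι) / (4 * l) ≤ 2 * l * ε := by
  classical
  let c := Fintype.card ι * F.info / 2
  let test (s : ι → Bool) (y : ι → W) : ℝ := clip l (signScore s (fun j => F.post (y j)) - c)
  have test_gap (s : ι → Bool) : ∫ y, test s y ∂(Measure.pi fun j => F.law (s j)) -
      ∫ y, test s y ∂((Measure.pi fun j => E.law (s j)).bind K) ≤ 2 * l * ε :=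
    calc _ ≤ (l - -l) * tvDist (Measure.pi fun j => F.law (s j))
          ((Measure.pi fun j => E.law (s j)).bind K) :=
        integral_sub_integral_le_mul_tvDist _ _ .of_discrete fun y => clip_mem_Icc hl.le _
      _ ≤ (l - -l) * ε := by gcongr; exacts [by linarith, hε s]
      _ = 2 * l * ε := by ring
  have sum_gap := Finset.sum_le_sum fun s (_ : s ∈ Finset.univ) => test_gap s
  rw [Finset.sum_sub_distrib, Finset.sum_const, Finset.card_univ, Fintype.card_fun,
    Fintype.card_bool, nsmul_eq_mul, Nat.cast_pow, Nat.cast_two] at sum_gap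
  have lower := F.le_sum_integral_clip_signScore_post (ι := ι) hl c
  have upper := E.sum_integral_clip_signScore_bind_le hl c K
    (a := fun y j => F.post (y j)) .of_discrete fun y j => F.abs_post_le_one _
  have source_center : Fintype.card ι * E.info / 2 - c = -D := by unfold c; linarith
  rw [source_center] at upper
  rw [sub_self] at lower
  refine le_of_mul_le_mul_left ?_ (pow_pos two_pos (Fintype.card ι) : (0 : ℝ) < _)
  refine le_trans (le_of_eq ?_) ((sub_le_sub lower upper).trans sum_gap)
  ring

lemma sq_div_ten_le_deficiency [Nonempty W] {κ : ℝ} (hκ : 0 < κ) (hκ1 : κ ≤ 1) [Nonempty ι]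
    (h : κ * √(Fintype.card ι) ≤ Fintype.card ι * (F.info - E.info) / 2) :
    κ ^ 2 / 10 ≤ deficiency (fun s : ι → Bool => Measure.pi fun j => E.law (s j))
      (fun s : ι → Bool => Measure.pi fun j => F.law (s j)) := by
  obtain ⟨D, hD⟩ : ∃ D, Fintype.card ι * (F.info - E.info) / 2 = D := ⟨_, rfl⟩
  rw [hD] at h
  have hd : (0 : ℝ) < Fintype.card ι := by exact_mod_cast Fintype.card_pos
  have hD0 : 0 < D := lt_of_lt_of_le (by positivity) h
  have sq_le : κ ^ 2 * Fintype.card ι ≤ D ^ 2 := by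
    calc κ ^ 2 * Fintype.card ι = (κ * √(Fintype.card ι)) ^ 2 := by
          rw [mul_pow, Real.sq_sqrt hd.le]
      _ ≤ D ^ 2 := by gcongr
  refine le_deficiency fun K _ ε hε hK => ?_
  let S := D ^ 2 + 5 / 2 * Fintype.card ι
  have hS : 0 < S := by positivity
  have optimal : 3 / 4 * D ≤ 2 * (S / D) * ε := by
    have := info_gap_le_of_tvDist_le hD (div_pos hS hD0) hK
    have cancel : S / (4 * (S / D)) = D / 4 := by field_simp
    linarith
  have key : 3 * D ^ 2 ≤ 8 * S * ε := by
    have := mul_le_mul_of_nonneg_right optimal hD0.le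
    have cancel : S / D * D = S := by field_simp
    nlinarith
  have S_le : κ ^ 2 * S ≤ 7 / 2 * D ^ 2 := by
    have : κ ^ 2 * D ^ 2 ≤ 1 * D ^ 2 := by gcongr; nlinarith
    unfold S; nlinarith
  have : 3 * (κ ^ 2 * S) ≤ 28 * (S * ε) := by linarith
  nlinarith

end Deficiency

end BinaryExperiment

end SignTesting

section Information

namespace BinaryExperiment

variable {V : Type*} [MeasurableSpace V]

/-- The Hellinger affinity between the two laws of a binary experiment. -/
noncomputable def affinity (E : BinaryExperiment V) : ℝ := ∫ v, √(1 - E.post v ^ 2) ∂E.mix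

lemma sq_post_mem_Icc (E : BinaryExperiment V) (v : V) : E.post v ^ 2 ∈ Set.Icc (0 : ℝ) 1 :=
  ⟨sq_nonneg _, (sq_le_one_iff_abs_le_one _).2 (E.abs_post_le_one v)⟩

lemma sqrt_one_sub_sq_post_mem_Icc (E : BinaryExperiment V) (v : V) :
    √(1 - E.post v ^ 2) ∈ Set.Icc (0 : ℝ) 1 :=
  ⟨Real.sqrt_nonneg _, Real.sqrt_le_one.2 (by linarith [sq_nonneg (E.post v)])⟩

lemma sq_post_eq (E : BinaryExperiment V) (v : V) : E.post v ^ 2 = 1 - √(1 - E.post v ^ 2) ^ 2 := by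
  rw [Real.sq_sqrt (sub_nonneg.2 (E.sq_post_mem_Icc v).2)]
  ring

variable [Countable V] [MeasurableSingletonClass V]

lemma integrable_post_pow (E : BinaryExperiment V) (k : ℕ) :
    Integrable (fun v => E.post v ^ k) E.mix :=
  integrable_of_mem_Icc .of_discrete fun v => abs_le.1 <| by
    rw [abs_pow]; exact pow_le_one₀ (abs_nonneg _) (E.abs_post_le_one v)

lemma integrable_post (E : BinaryExperiment V) : Integrable E.post E.mix := by
  simpa using E.integrable_post_pow 1

lemma integral_law (E : BinaryExperiment V) (b : Bool) (F : V → ℝ) :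
    ∫ v, F v ∂E.law b = ∫ v, (1 + boolSign b * E.post v) * F v ∂E.mix :=
  integral_withDensity_ofReal .of_discrete (E.law_density_nonneg b) F

lemma integral_mix (E : BinaryExperiment V) {F : V → ℝ} {a b : ℝ} (hF : ∀ v, F v ∈ Set.Icc a b) :
    ∫ v, F v ∂E.mix = (∫ v, F v ∂E.law true + ∫ v, F v ∂E.law false) / 2 := by
  have hint (s : Bool) : Integrable (fun v => (1 + boolSign s * E.post v) * F v) E.mix :=
    (integrable_of_mem_Icc .of_discrete hF).bdd_mul (c := 2)
      Measurable.of_discrete.aestronglyMeasurable (Filter.Eventually.of_forall fun v => by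
        rw [Real.norm_of_nonneg (E.law_density_nonneg s v)]
        linarith [(abs_le.1 (abs_boolSign_mul_le_one (E.abs_post_le_one v) s)).2])
  rw [integral_law, integral_law, ← integral_add (hint true) (hint false), ← integral_div]
  simp only [boolSign]
  congr 1 with v
  norm_num
  ring

section Convolution

variable [AddMonoid V]

lemma integral_law_conv_law (E₁ E₂ : BinaryExperiment V) (b : Bool) (F : V → ℝ) :
    ∫ v, F v ∂(E₁.law b ∗ E₂.law b) = ∫ z, (1 + boolSign b * E₁.post z.1) *
      (1 + boolSign b * E₂.post z.2) * F (z.1 + z.2) ∂(E₁.mix.prod E₂.mix) := by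
  have hadd : Measurable fun z : V × V => z.1 + z.2 := .of_discrete
  have hF : Measurable F := .of_discrete
  have hdensity : Measurable fun z : V × V =>
      (1 + boolSign b * E₁.post z.1) * (1 + boolSign b * E₂.post z.2) := .of_discrete
  have law_prod : (E₁.law b).prod (E₂.law b) = (E₁.mix.prod E₂.mix).withDensity fun z =>
      ENNReal.ofReal ((1 + boolSign b * E₁.post z.1) * (1 + boolSign b * E₂.post z.2)) := by
    unfold law
    rw [prod_withDensity .of_discrete .of_discrete]
    simp only [← ENNReal.ofReal_mul (E₁.law_density_nonneg b _)]
  rw [Measure.conv, integral_map hadd.aemeasurable hF.aestronglyMeasurable, law_prod,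
    integral_withDensity_ofReal hdensity
      fun z => mul_nonneg (E₁.law_density_nonneg b z.1) (E₂.law_density_nonneg b z.2)]

variable {E E₁ E₂ : BinaryExperiment V}

lemma integral_mix_of_law_eq_conv (hlaw : ∀ b, E.law b = E₁.law b ∗ E₂.law b) {F : V → ℝ}
    {a b : ℝ} (hF : ∀ v, F v ∈ Set.Icc a b) :
    ∫ v, F v ∂E.mix =
      ∫ z, (1 + E₁.post z.1 * E₂.post z.2) * F (z.1 + z.2) ∂(E₁.mix.prod E₂.mix) := by
  have hFadd : Integrable (fun z : V × V => F (z.1 + z.2)) (E₁.mix.prod E₂.mix) :=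
    integrable_of_mem_Icc .of_discrete fun z => hF _
  have hint (s : Bool) : Integrable (fun z : V × V => (1 + boolSign s * E₁.post z.1) *
      (1 + boolSign s * E₂.post z.2) * F (z.1 + z.2)) (E₁.mix.prod E₂.mix) := by
    have density_meas : Measurable fun z : V × V =>
      (1 + boolSign s * E₁.post z.1) * (1 + boolSign s * E₂.post z.2) := .of_discrete
    refine hFadd.bdd_mul (c := 2 * 2) density_meas.aestronglyMeasurable
      (Filter.Eventually.of_forall fun z => ?_)
    rw [norm_mul]
    gcongr <;> rw [Real.norm_of_nonneg (law_density_nonneg _ _ _)]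
    · linarith [(abs_le.1 (abs_boolSign_mul_le_one (E₁.abs_post_le_one z.1) s)).2]
    · linarith [(abs_le.1 (abs_boolSign_mul_le_one (E₂.abs_post_le_one z.2) s)).2]
  rw [E.integral_mix hF, hlaw, hlaw, integral_law_conv_law, integral_law_conv_law,
    ← integral_add (hint true) (hint false), ← integral_div]
  simp only [boolSign]
  congr 1 with z
  norm_num
  ring

lemma le_sq_mul_one_add_mul {h g q : ℝ} (hh : |h| ≤ 1) (hg : |g| ≤ 1)
    (hq : q * (1 + h * g) = h + g) :
    h ^ 2 + 2 * (h * g) - h ^ 3 * g + (1 - 2 * h ^ 2) / 2 * g ^ 2 ≤ (1 + h * g) * q ^ 2 := by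
  have hu := abs_le.1 ((abs_mul h g).trans_le (mul_le_one₀ hh (abs_nonneg g) hg))
  have shift : (1 + h * g) * (q - h) = g * (1 - h ^ 2) := by linear_combination hq
  have sq_le : (g * (1 - h ^ 2)) ^ 2 ≤ 2 * ((1 + h * g) * (q - h) ^ 2) := by
    rw [← shift]
    nlinarith [mul_nonneg (sub_nonneg.2 hu.2) (mul_nonneg (neg_le_iff_add_nonneg'.1 hu.1)
      (sq_nonneg (q - h)))]
  have expand : (1 + h * g) * q ^ 2 =
      (1 + h * g) * (q - h) ^ 2 + 2 * h * (h + g) - h ^ 2 * (1 + h * g) := by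
    linear_combination 2 * h * hq
  linarith [sq_nonneg (g * h ^ 2)]

variable (E E₁ E₂) in
lemma integrable_one_add_mul_sq_post_add :
    Integrable (fun z : V × V => (1 + E₁.post z.1 * E₂.post z.2) * E.post (z.1 + z.2) ^ 2)
      (E₁.mix.prod E₂.mix) := by
  simp only [one_add_mul]
  have hq : Integrable (fun z : V × V => E.post (z.1 + z.2) ^ 2) (E₁.mix.prod E₂.mix) :=
    integrable_of_mem_Icc .of_discrete fun z => E.sq_post_mem_Icc _
  refine hq.add ((E₁.integrable_post.mul_prod E₂.integrable_post).mul_bdd (c := 1)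
    hq.aestronglyMeasurable (Filter.Eventually.of_forall fun z => ?_))
  rw [Real.norm_of_nonneg (E.sq_post_mem_Icc _).1]
  exact (E.sq_post_mem_Icc _).2

-- If the sum of two independent observations is sufficient for them, `hpost` is the rule for
-- combining posterior means.
lemma info_add_le_info (hlaw : ∀ b, E.law b = E₁.law b ∗ E₂.law b)
    (hpost : ∀ v w, E.post (v + w) * (1 + E₁.post v * E₂.post w) = E₁.post v + E₂.post w) :
    E₁.info + (1 - 2 * E₁.info) / 2 * E₂.info ≤ E.info := by
  have const : Integrable (fun z : V × V => E₁.post z.1 ^ 2) (E₁.mix.prod E₂.mix) :=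
    (E₁.integrable_post_pow 2).comp_fst _
  have linear : Integrable (fun z : V × V => 2 * (E₁.post z.1 * E₂.post z.2))
    (E₁.mix.prod E₂.mix) := (E₁.integrable_post.mul_prod E₂.integrable_post).const_mul 2
  have cubic : Integrable (fun z : V × V => E₁.post z.1 ^ 3 * E₂.post z.2)
    (E₁.mix.prod E₂.mix) := (E₁.integrable_post_pow 3).mul_prod E₂.integrable_post
  have half : Integrable (fun v => (1 - 2 * E₁.post v ^ 2) / 2) E₁.mix :=
    ((integrable_const 1).sub ((E₁.integrable_post_pow 2).const_mul 2)).div_const 2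
  have quadratic : Integrable (fun z : V × V => (1 - 2 * E₁.post z.1 ^ 2) / 2 * E₂.post z.2 ^ 2)
    (E₁.mix.prod E₂.mix) := half.mul_prod (E₂.integrable_post_pow 2)
  have integral_half : ∫ v, (1 - 2 * E₁.post v ^ 2) / 2 ∂E₁.mix = (1 - 2 * E₁.info) / 2 := by
    rw [integral_div, integral_sub (integrable_const 1) ((E₁.integrable_post_pow 2).const_mul 2),
      integral_const_mul, info]
    simp
  have := integral_mono (((const.add linear).sub cubic).add quadratic)
    (integrable_one_add_mul_sq_post_add E E₁ E₂) fun z =>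
    le_sq_mul_one_add_mul (E₁.abs_post_le_one z.1) (E₂.abs_post_le_one z.2) (hpost z.1 z.2)
  rw [integral_add' ((const.add linear).sub cubic) quadratic,
    integral_sub' (const.add linear) cubic, integral_add' const linear, integral_const_mul,
    integral_fun_fst (fun v => E₁.post v ^ 2),
    integral_prod_mul E₁.post E₂.post, integral_prod_mul (fun v => E₁.post v ^ 3) E₂.post,
    integral_prod_mul (fun v => (1 - 2 * E₁.post v ^ 2) / 2) fun v => E₂.post v ^ 2,
    ← integral_mix_of_law_eq_conv hlaw E.sq_post_mem_Icc, integral_half, E₂.integral_post] at this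
  simpa [info] using this

end Convolution

section Affinity

variable (E : BinaryExperiment V)

lemma integrable_sqrt_one_sub_sq_post : Integrable (fun v => √(1 - E.post v ^ 2)) E.mix :=
  integrable_of_mem_Icc .of_discrete E.sqrt_one_sub_sq_post_mem_Icc

lemma one_sub_affinity_le_info : 1 - E.affinity ≤ E.info := by
  have := integral_mono ((integrable_const 1).sub E.integrable_sqrt_one_sub_sq_post)
    (E.integrable_post_pow 2) fun v => by
      have := E.sqrt_one_sub_sq_post_mem_Icc v
      rw [E.sq_post_eq v, Pi.sub_apply]
      nlinarith [this.1, this.2]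
  rw [integral_sub' (integrable_const 1) E.integrable_sqrt_one_sub_sq_post] at this
  simpa [affinity, info] using this

lemma info_le_two_mul_one_sub_affinity : E.info ≤ 2 * (1 - E.affinity) := by
  have := integral_mono (E.integrable_post_pow 2)
    (((integrable_const 1).sub E.integrable_sqrt_one_sub_sq_post).const_mul 2) fun v => by
      have := E.sqrt_one_sub_sq_post_mem_Icc v
      rw [E.sq_post_eq v, Pi.sub_apply]
      nlinarith [sq_nonneg (1 - √(1 - E.post v ^ 2))]
  rw [integral_const_mul, integral_sub' (integrable_const 1) E.integrable_sqrt_one_sub_sq_post]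
    at this
  simpa [affinity, info] using this

end Affinity

section OfDensity

variable (μ : Measure V) (p : Bool → V → ℝ)

/-- The binary experiment whose laws have the densities `p b` with respect to `μ`. -/
noncomputable def ofDensity (hp : ∀ b v, 0 < p b v) (h1 : ∀ b, ∫ v, p b v ∂μ = 1) :
    BinaryExperiment V where
  mix := μ.withDensity fun v => ENNReal.ofReal ((p true v + p false v) / 2)
  isProbabilityMeasure_mix := by
    have hint (b : Bool) : Integrable (p b) μ := integrable_of_integral_eq_one (h1 b)
    refine isProbabilityMeasure_withDensity_ofReal (((hint true).add (hint false)).div_const 2)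
      (fun v => by linarith [hp true v, hp false v]) ?_
    rw [integral_div, integral_add (hint true) (hint false), h1, h1]
    norm_num
  post v := (p true v - p false v) / (p true v + p false v)
  abs_post_le_one v := by
    rw [abs_div, abs_of_pos (add_pos (hp true v) (hp false v))]
    exact div_le_one_of_le₀ (abs_le.2 ⟨by linarith [hp true v], by linarith [hp false v]⟩)
      (add_pos (hp true v) (hp false v)).le
  integral_post := by
    rw [integral_withDensity_ofReal .of_discrete fun v => by linarith [hp true v, hp false v]]
    have hint (b : Bool) : Integrable (p b) μ := integrable_of_integral_eq_one (h1 b)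
    calc ∫ v, (p true v + p false v) / 2 * ((p true v - p false v) / (p true v + p false v)) ∂μ
        = ∫ v, (p true v - p false v) / 2 ∂μ := by
          congr 1 with v
          have := add_pos (hp true v) (hp false v)
          field_simp
      _ = 0 := by
          rw [integral_div, integral_sub (hint true) (hint false), h1, h1, sub_self, zero_div]

variable {μ p} (hp : ∀ b v, 0 < p b v) (h1 : ∀ b, ∫ v, p b v ∂μ = 1)

lemma ofDensity_law (b : Bool) :
    (ofDensity μ p hp h1).law b = μ.withDensity fun v => ENNReal.ofReal (p b v) := by
  rw [law, ofDensity, ← withDensity_mul _ .of_discrete .of_discrete]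
  congr 1 with v
  have := add_pos (hp true v) (hp false v)
  rw [Pi.mul_apply, ← ENNReal.ofReal_mul (by positivity)]
  congr 1
  cases b <;> simp only [boolSign] <;> field_simp <;> simp <;> ring

lemma ofDensity_affinity :
    (ofDensity μ p hp h1).affinity = ∫ v, √(p true v * p false v) ∂μ := by
  rw [affinity, ofDensity,
    integral_withDensity_ofReal .of_discrete fun v => by linarith [hp true v, hp false v]]
  congr 1 with v
  have hsum := add_pos (hp true v) (hp false v)
  calc (p true v + p false v) / 2 * √(1 - ((p true v - p false v) / (p true v + p false v)) ^ 2)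
      = √(((p true v + p false v) / 2) ^ 2 *
          (1 - ((p true v - p false v) / (p true v + p false v)) ^ 2)) := by
        rw [Real.sqrt_mul (sq_nonneg _), Real.sqrt_sq (by positivity)]
    _ = √(p true v * p false v) := by
        congr 1
        field_simp
        ring

end OfDensity

end BinaryExperiment

end Information

section SignLikelihood

/-- The likelihood of the sign `b` given a pair `v` of independent Poisson counts of equal mean,
relative to the case where the two means are changed by the factors `1 ± δ` in the order
prescribed by `b`. -/
noncomputable def signLikelihood (δ : ℝ) (b : Bool) (v : Bool → ℕ) : ℝ :=
  ∏ i, (1 + boolSign b * boolSign i * δ) ^ v i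

lemma signLikelihood_add (δ : ℝ) (b : Bool) (v w : Bool → ℕ) :
    signLikelihood δ b (v + w) = signLikelihood δ b v * signLikelihood δ b w := by
  simp only [signLikelihood, Pi.add_apply, pow_add, Finset.prod_mul_distrib]

lemma integral_signLikelihood (r : ℝ≥0) (δ : ℝ) (b : Bool) :
    ∫ v, signLikelihood δ b v ∂(poissonVec fun _ => r) = 1 := by
  unfold signLikelihood
  rw [integral_prod_pow_poissonVec, Real.exp_eq_one_iff]
  cases b <;> simp [boolSign]

/-- The factors `1 ± δ` by which the sign `b` changes the two Poisson means. -/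
noncomputable def signFactor (δ : ℝ) (b i : Bool) : ℝ≥0 :=
  (1 + boolSign b * boolSign i * δ).toNNReal

variable {δ : ℝ} (h0 : 0 ≤ δ) (h1 : δ < 1)
include h0 h1

lemma one_add_boolSign_mul_pos (b i : Bool) : 0 < 1 + boolSign b * boolSign i * δ := by
  cases b <;> cases i <;> simp [boolSign] <;> linarith

lemma coe_signFactor (b i : Bool) : (signFactor δ b i : ℝ) = 1 + boolSign b * boolSign i * δ :=
  Real.coe_toNNReal _ (one_add_boolSign_mul_pos h0 h1 b i).le

lemma signLikelihood_pos (b : Bool) (v : Bool → ℕ) : 0 < signLikelihood δ b v :=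
  Finset.prod_pos fun i _ => pow_pos (one_add_boolSign_mul_pos h0 h1 b i) _

lemma withDensity_signLikelihood (r : ℝ≥0) (b : Bool) :
    (poissonVec fun _ => r).withDensity (fun v => ENNReal.ofReal (signLikelihood δ b v)) =
      poissonVec fun i => r * signFactor δ b i := by
  rw [poissonVec_mul_eq_withDensity]
  congr 1 with v
  have total : ∑ i, ((r : ℝ) - r * (1 + boolSign b * boolSign i * δ)) = 0 := by
    cases b <;> simp [boolSign] <;> ring
  simp only [Finset.prod_mul_distrib, ← Real.exp_sum, coe_signFactor h0 h1, total, Real.exp_zero,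
    one_mul, signLikelihood]

lemma sqrt_signLikelihood_mul (v : Bool → ℕ) :
    √(signLikelihood δ true v * signLikelihood δ false v) = ∏ i, √(1 - δ ^ 2) ^ v i := by
  have hδ : 0 ≤ 1 - δ ^ 2 := sub_nonneg.2 (pow_le_one₀ h0 h1.le)
  have product : signLikelihood δ true v * signLikelihood δ false v =
      (∏ i, √(1 - δ ^ 2) ^ v i) ^ 2 := by
    rw [signLikelihood, signLikelihood, ← Finset.prod_mul_distrib, ← Finset.prod_pow]
    refine Finset.prod_congr rfl fun i _ => ?_
    rw [← mul_pow, ← pow_mul, mul_comm (v i), pow_mul, Real.sq_sqrt hδ]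
    congr 1
    cases i <;> simp [boolSign] <;> ring
  rw [product, Real.sqrt_sq (Finset.prod_nonneg fun i _ => by positivity)]

end SignLikelihood

section PoissonPair

variable {δ : ℝ} (h0 : 0 ≤ δ) (h1 : δ < 1)

/-- The experiment of observing two independent Poisson counts of means `r * (1 ± δ)`, in the
order prescribed by the sign. -/
noncomputable def poissonPair (r : ℝ≥0) : BinaryExperiment (Bool → ℕ) :=
  .ofDensity (poissonVec fun _ => r) (signLikelihood δ) (signLikelihood_pos h0 h1)
    (integral_signLikelihood r δ)

lemma poissonPair_law (r : ℝ≥0) (b : Bool) :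
    (poissonPair h0 h1 r).law b = poissonVec fun i => r * signFactor δ b i := by
  rw [poissonPair, BinaryExperiment.ofDensity_law, withDensity_signLikelihood h0 h1]

lemma poissonPair_post_add (r s t : ℝ≥0) (v w : Bool → ℕ) :
    (poissonPair h0 h1 t).post (v + w) *
        (1 + (poissonPair h0 h1 r).post v * (poissonPair h0 h1 s).post w) =
      (poissonPair h0 h1 r).post v + (poissonPair h0 h1 s).post w := by
  have h (b : Bool) (v : Bool → ℕ) := signLikelihood_pos h0 h1 b v
  have hv := add_pos (h true v) (h false v)
  have hw := add_pos (h true w) (h false w)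
  have hvw := add_pos (mul_pos (h true v) (h true w)) (mul_pos (h false v) (h false w))
  simp only [poissonPair, BinaryExperiment.ofDensity, signLikelihood_add]
  field_simp
  ring

lemma poissonPair_affinity (r : ℝ≥0) :
    (poissonPair h0 h1 r).affinity = Real.exp (-(2 * r * (1 - √(1 - δ ^ 2)))) := by
  rw [poissonPair, BinaryExperiment.ofDensity_affinity]
  simp only [sqrt_signLikelihood_mul h0 h1, integral_prod_pow_poissonVec]
  congr 1
  simp
  ring

lemma poissonPair_info_le (r : ℝ≥0) : (poissonPair h0 h1 r).info ≤ 4 * r * δ ^ 2 := by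
  have one_sub_sqrt_le : 1 - √(1 - δ ^ 2) ≤ δ ^ 2 := by
    have hδ : 0 ≤ 1 - δ ^ 2 := sub_nonneg.2 (pow_le_one₀ h0 h1.le)
    nlinarith [Real.sq_sqrt hδ, Real.sqrt_nonneg (1 - δ ^ 2), Real.sqrt_le_one.2
      (show 1 - δ ^ 2 ≤ 1 by linarith [sq_nonneg δ])]
  calc (poissonPair h0 h1 r).info
      ≤ 2 * (1 - Real.exp (-(2 * r * (1 - √(1 - δ ^ 2))))) := by
        rw [← poissonPair_affinity]
        exact BinaryExperiment.info_le_two_mul_one_sub_affinity _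
    _ ≤ 2 * (2 * r * (1 - √(1 - δ ^ 2))) := by
        linarith [Real.add_one_le_exp (-(2 * r * (1 - √(1 - δ ^ 2))))]
    _ ≤ 2 * (2 * r * δ ^ 2) := by gcongr
    _ = 4 * r * δ ^ 2 := by ring

lemma le_poissonPair_info (r : ℝ≥0) :
    r * δ ^ 2 / (1 + r * δ ^ 2) ≤ (poissonPair h0 h1 r).info := by
  have half_sq_le : δ ^ 2 / 2 ≤ 1 - √(1 - δ ^ 2) := by
    have hδ : 0 ≤ 1 - δ ^ 2 := sub_nonneg.2 (pow_le_one₀ h0 h1.le)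
    nlinarith [Real.sq_sqrt hδ, sq_nonneg (1 - √(1 - δ ^ 2))]
  have : 0 ≤ r * δ ^ 2 := by positivity
  calc r * δ ^ 2 / (1 + r * δ ^ 2) = 1 - (1 + r * δ ^ 2)⁻¹ := by field_simp; ring
    _ ≤ 1 - (Real.exp (r * δ ^ 2))⁻¹ := by
        gcongr
        linarith [Real.add_one_le_exp (r * δ ^ 2)]
    _ = 1 - Real.exp (-(2 * r * (δ ^ 2 / 2))) := by rw [← Real.exp_neg]; ring_nf
    _ ≤ 1 - Real.exp (-(2 * r * (1 - √(1 - δ ^ 2)))) := by gcongr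
    _ ≤ (poissonPair h0 h1 r).info := by
        rw [← poissonPair_affinity]
        exact BinaryExperiment.one_sub_affinity_le_info _

lemma poissonPair_info_add_le (r t : ℝ≥0) :
    (poissonPair h0 h1 r).info + (1 - 2 * (poissonPair h0 h1 r).info) / 2 *
      (poissonPair h0 h1 t).info ≤ (poissonPair h0 h1 (r + t)).info := by
  refine BinaryExperiment.info_add_le_info (fun b => ?_) (poissonPair_post_add h0 h1 r t (r + t))
  simp only [poissonPair_law, poissonVec_conv_poissonVec, add_mul]
  rfl

end PoissonPair

section Embedding

variable {ι κ : Type*}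

lemma extend_zero_eq_iff {M : Type*} [Zero M] {e : ι → κ} (he : e.Injective) {y : ι → M}
    {x : κ → M} : Function.extend e y (0 : κ → M) = x ↔ y = x ∘ e ∧ ∀ i ∉ Set.range e, x i = 0 := by
  refine ⟨?_, ?_⟩
  · rintro rfl
    exact ⟨(Function.extend_comp he y 0).symm, fun i hi => Function.extend_apply' _ _ _ hi⟩
  · rintro ⟨rfl, hx⟩
    ext i
    by_cases hi : i ∈ Set.range e
    · obtain ⟨j, rfl⟩ := hi
      rw [he.extend_apply, Function.comp_apply]
    · rw [Function.extend_apply' _ _ _ hi, hx i hi, Pi.zero_apply]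

variable [Fintype ι] [Fintype κ]

lemma poissonVec_map_extend {e : ι → κ} (he : e.Injective) (a : ι → ℝ≥0) :
    (poissonVec a).map (fun y => Function.extend e y (0 : κ → ℕ)) =
      poissonVec (Function.extend e a 0) := by
  refine Measure.ext_of_singleton fun x => ?_
  rw [Measure.map_apply .of_discrete (measurableSet_singleton x)]
  by_cases hx : ∀ i ∉ Set.range e, x i = 0
  · have preimage : (fun y => Function.extend e y (0 : κ → ℕ)) ⁻¹' {x} = {x ∘ e} :=
      Set.ext fun _ => (extend_zero_eq_iff he).trans (and_iff_left hx)
    rw [preimage, poissonVec, poissonVec, Measure.pi_singleton, Measure.pi_singleton]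
    refine Fintype.prod_of_injective e he _ _ (fun i hi => ?_) fun j => ?_
    · rw [Function.extend_apply' _ _ _ hi, hx i hi, Pi.zero_apply, poissonMeasure_zero,
        Measure.dirac_apply_of_mem (Set.mem_singleton 0)]
    · rw [he.extend_apply, Function.comp_apply]
  · have preimage : (fun y => Function.extend e y (0 : κ → ℕ)) ⁻¹' {x} = ∅ :=
      Set.eq_empty_of_forall_notMem fun _ hy => hx ((extend_zero_eq_iff he).1 hy).2
    rw [preimage, measure_empty]
    push Not at hx
    obtain ⟨i, hi, hxi⟩ := hx
    rw [poissonVec, Measure.pi_singleton, eq_comm]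
    refine Finset.prod_eq_zero (Finset.mem_univ i) ?_
    rw [Function.extend_apply' _ _ _ hi, Pi.zero_apply, poissonMeasure_zero]
    simp [hxi.symm]

lemma pi_poissonVec_map_uncurry (a : ι → κ → ℝ≥0) :
    (Measure.pi fun j => poissonVec (a j)).map Function.uncurry =
      poissonVec (Function.uncurry a) := by
  refine Measure.ext_of_singleton fun x => ?_
  have preimage : (Function.uncurry : (ι → κ → ℕ) → ι × κ → ℕ) ⁻¹' {x} = {Function.curry x} :=
    Set.ext fun _ => (Equiv.curry ι κ ℕ).symm_apply_eq
  rw [Measure.map_apply .of_discrete (measurableSet_singleton x), preimage, Measure.pi_singleton,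
    poissonVec, Measure.pi_singleton, Fintype.prod_prod_type]
  simp only [poissonVec, Measure.pi_singleton, Function.curry_apply, Function.uncurry_apply_pair]

end Embedding

section SignDistribution

variable {ι κ : Type*} [Fintype ι] {e : ι × Bool → κ} {δ : ℝ} (h0 : 0 ≤ δ) (h1 : δ < 1)

/-- The uniform distribution on the image of `e`, in which the pair of cells `e (j, true)` and
`e (j, false)` is perturbed by the factors `1 ± δ` in the order prescribed by `s j`. -/
noncomputable def signDist (e : ι × Bool → κ) (δ : ℝ) (s : ι → Bool) : κ → ℝ≥0 :=
  Function.extend e (Function.uncurry fun j i => signFactor δ (s j) i / (2 * Fintype.card ι)) 0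

variable [Fintype κ]

include h0 h1 in
lemma sum_signDist [Nonempty ι] (he : e.Injective) (s : ι → Bool) :
    ∑ i, signDist e δ s i = 1 := by
  have sum_signFactor (b : Bool) : signFactor δ b true + signFactor δ b false = 2 := by
    refine NNReal.coe_injective ?_
    rw [NNReal.coe_add, coe_signFactor h0 h1, coe_signFactor h0 h1]
    cases b <;> simp [boolSign] <;> ring
  have sum_extend := Fintype.sum_of_injective e he
    (Function.uncurry fun j i => signFactor δ (s j) i / (2 * Fintype.card ι)) (signDist e δ s)
    (fun i hi => Function.extend_apply' _ _ _ hi) fun p => (he.extend_apply _ _ _).symm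
  rw [← sum_extend, Fintype.sum_prod_type]
  simp only [Function.uncurry_apply_pair, Fintype.sum_bool, ← add_div, sum_signFactor,
    Finset.sum_const, Finset.card_univ, nsmul_eq_mul]
  have : (Fintype.card ι : ℝ≥0) ≠ 0 := Nat.cast_ne_zero.2 Fintype.card_ne_zero
  field_simp

lemma poissonVec_smul_signDist (he : e.Injective) (s : ι → Bool) (L : ℕ) :
    poissonVec (L • signDist e δ s) =
      (Measure.pi fun j => (poissonPair h0 h1 (L / (2 * Fintype.card ι))).law (s j)).map
        fun y => Function.extend e (Function.uncurry y) (0 : κ → ℕ) := by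
  have extend_meas : Measurable fun y : ι × Bool → ℕ => (Function.extend e y 0 : κ → ℕ) :=
    .of_discrete
  have uncurry_meas : Measurable (Function.uncurry : (ι → Bool → ℕ) → ι × Bool → ℕ) :=
    .of_discrete
  simp only [poissonPair_law]
  rw [← Function.comp_def (fun y => Function.extend e y (0 : κ → ℕ)) Function.uncurry,
    ← Measure.map_map extend_meas uncurry_meas, pi_poissonVec_map_uncurry,
    poissonVec_map_extend he]
  congr 1
  refine ((extend_zero_eq_iff he).2 ⟨?_, fun i hi => ?_⟩).symm
  · ext p
    simp [signDist, he.extend_apply, Function.uncurry, div_mul_eq_mul_div, mul_div_assoc]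
  · simp [signDist, Function.extend_apply' _ _ _ hi]

lemma deficiency_poissonPair_le [Nonempty ι] (he : e.Injective) (n m : ℕ) :
    deficiency
        (fun s : ι → Bool =>
          Measure.pi fun j => (poissonPair h0 h1 (n / (2 * Fintype.card ι))).law (s j))
        (fun s : ι → Bool =>
          Measure.pi fun j => (poissonPair h0 h1 ((n + m : ℕ) / (2 * Fintype.card ι))).law (s j)) ≤
      deficiency (fun q : {q : κ → ℝ≥0 // ∑ i, q i = 1} => poissonVec (n • q.1))
        (fun q => poissonVec ((n + m) • q.1)) := by
  have embed_meas : Measurable fun y : ι → Bool → ℕ =>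
    (Function.extend e (Function.uncurry y) 0 : κ → ℕ) := .of_discrete
  have restrict_meas : Measurable fun (x : κ → ℕ) j b => x (e (j, b)) := .of_discrete
  refine deficiency_le_of_map embed_meas restrict_meas
    (fun s => ⟨signDist e δ s, sum_signDist h0 h1 he s⟩)
    (fun s => poissonVec_smul_signDist h0 h1 he s n) fun s => ?_
  rw [poissonVec_smul_signDist h0 h1 he s (n + m), Measure.map_map restrict_meas embed_meas]
  convert! Measure.map_id.symm
  ext y j b
  exact he.extend_apply _ _ _

end SignDistribution

section LowerBound

lemma le_poissonPair_info_gain {δ : ℝ} (h0 : 0 ≤ δ) (h1 : δ < 1) {n m d : ℕ} (hn : 1 ≤ n)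
    (hd : 1 ≤ d) (hδ : δ ^ 2 = d / (8 * n)) :
    (m : ℝ) / (4 * (16 * n + m)) ≤
      (poissonPair h0 h1 ((n + m : ℕ) / (2 * d))).info -
        (poissonPair h0 h1 (n / (2 * d))).info := by
  have : (0 : ℝ) < n := by exact_mod_cast hn
  have : (0 : ℝ) < d := by exact_mod_cast hd
  have source : (poissonPair h0 h1 (n / (2 * d))).info ≤ 1 / 4 := by
    refine (poissonPair_info_le h0 h1 _).trans_eq ?_
    rw [hδ]
    push_cast
    field_simp
    norm_num
  have fresh : (m : ℝ) / (16 * n + m) ≤ (poissonPair h0 h1 (m / (2 * d))).info := by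
    refine le_trans (Eq.le ?_) (le_poissonPair_info h0 h1 _)
    rw [hδ]
    push_cast
    field_simp
    ring
  have gain := poissonPair_info_add_le h0 h1 (n / (2 * d)) (m / (2 * d))
  rw [← add_div, ← Nat.cast_add] at gain
  have damping : 1 / 4 ≤ (1 - 2 * (poissonPair h0 h1 (n / (2 * d))).info) / 2 := by linarith
  have : 0 ≤ (m : ℝ) / (16 * n + m) := by positivity
  calc (m : ℝ) / (4 * (16 * n + m)) = 1 / 4 * (m / (16 * n + m)) := by field_simp
    _ ≤ (1 - 2 * (poissonPair h0 h1 (n / (2 * d))).info) / 2 *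
          (poissonPair h0 h1 (m / (2 * d))).info := by
        gcongr
    _ ≤ _ := by linarith

lemma le_sqrt_min_mul {n m k : ℕ} (hk : 2 ≤ k) (h : 2 * ((n : ℝ) / √k + √n) ≤ m) :
    (n : ℝ) ≤ √(min (k / 2) n : ℕ) * m := by
  have : 0 < √(k : ℝ) := Real.sqrt_pos.2 (by positivity)
  rcases le_total (k / 2) n with hkn | hnk
  · rw [min_eq_left hkn]
    have sqrt_le : √(k : ℝ) ≤ 2 * √(k / 2 : ℕ) := by
      have : (k : ℝ) ≤ 2 ^ 2 * (k / 2 : ℕ) := by exact_mod_cast (by omega : k ≤ 2 ^ 2 * (k / 2))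
      calc √(k : ℝ) ≤ √(2 ^ 2 * (k / 2 : ℕ)) := Real.sqrt_le_sqrt this
        _ = 2 * √(k / 2 : ℕ) := by rw [Real.sqrt_mul (by positivity), Real.sqrt_sq two_pos.le]
    calc (n : ℝ) = √k * (n / √k) := by field_simp
      _ ≤ 2 * √(k / 2 : ℕ) * (n / √k) := by gcongr
      _ = √(k / 2 : ℕ) * (2 * (n / √k)) := by ring
      _ ≤ √(k / 2 : ℕ) * m := by
        gcongr
        linarith [Real.sqrt_nonneg n]
  · rw [min_eq_right hnk]
    calc (n : ℝ) = √n * √n := (Real.mul_self_sqrt n.cast_nonneg).symm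
      _ ≤ √n * m := by
        gcongr
        have : 0 ≤ (n : ℝ) / √k := by positivity
        linarith [Real.sqrt_nonneg n]

lemma le_ampErr_poissonizedModel {n m k : ℕ} (hn : 1 ≤ n) (hk : 2 ≤ k)
    (h : 2 * ((n : ℝ) / √k + √n) ≤ m) :
    (1 / 136) ^ 2 / 10 ≤ ampErr (poissonizedModel k) n m := by
  obtain ⟨d, hd⟩ : ∃ d, d = min (k / 2) n := ⟨_, rfl⟩
  have hn0 : (0 : ℝ) < n := by exact_mod_cast hn
  have hd1 : 1 ≤ d := by omega
  have hdn : (d : ℝ) ≤ n := by exact_mod_cast (by omega : d ≤ n)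
  have : Nonempty (Fin d) := ⟨⟨0, hd1⟩⟩
  obtain ⟨e⟩ : Nonempty (Fin d × Bool ↪ Fin k) :=
    Function.Embedding.nonempty_of_card_le (by simp; omega)
  have hδ : √((d : ℝ) / (8 * n)) ^ 2 = d / (8 * n) := Real.sq_sqrt (by positivity)
  have hδ1 : √((d : ℝ) / (8 * n)) < 1 := by
    rw [Real.sqrt_lt' one_pos, div_lt_iff₀ (by positivity)]
    linarith
  rw [ampErr_poissonizedModel_eq_deficiency]
  refine le_trans (BinaryExperiment.sq_div_ten_le_deficiency (by norm_num) (by norm_num) ?_)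
    (deficiency_poissonPair_le (Real.sqrt_nonneg _) hδ1 e.injective n m)
  rw [Fintype.card_fin]
  have one_le_sqrt : 1 ≤ √(d : ℝ) := Real.one_le_sqrt.2 (by exact_mod_cast hd1)
  have n_le : (n : ℝ) ≤ √d * m := hd ▸ le_sqrt_min_mul hk h
  have m_le : (m : ℝ) ≤ √d * m := le_mul_of_one_le_left m.cast_nonneg one_le_sqrt
  calc 1 / 136 * √(d : ℝ) ≤ d * (m / (4 * (16 * n + m))) / 2 := by
        rw [← mul_div_assoc, div_div, le_div_iff₀ (by positivity)]
        nlinarith [Real.sq_sqrt (d.cast_nonneg : (0 : ℝ) ≤ d),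
          mul_le_mul_of_nonneg_left n_le (Real.sqrt_nonneg d),
          mul_le_mul_of_nonneg_left m_le (Real.sqrt_nonneg d)]
    _ ≤ _ := by
        gcongr
        exact le_poissonPair_info_gain _ hδ1 hn hd1 hδ

end LowerBound

/-- Poissonized discrete distribution model.
There are absolute constants `c₁, C₁, c₂ > 0` such that for all `n ≥ 1`, `k ≥ 2`,
`m ≥ 0`: (i) if `m ≤ c₁(n/√k + √n)` then `ε*(𝒫, n, m) ≤ 0.1`; and
(ii) if `m ≥ C₁(n/√k + √n)` then `ε*(𝒫, n, m) ≥ c₂`.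
That is, an `(n, n+m)` amplification with error `0.1` is possible iff
`m = O(n/√k + √n)`. -/
theorem poissonized_amplification_complexity :
    ∃ c₁ C₁ c₂ : ℝ, 0 < c₁ ∧ 0 < C₁ ∧ 0 < c₂ ∧
      ∀ (n k m : ℕ), 1 ≤ n → 2 ≤ k →
        (((m : ℝ) ≤ c₁ * ((n : ℝ) / Real.sqrt k + Real.sqrt n) →
            ampErr (poissonizedModel k) n m ≤ 0.1) ∧
          (C₁ * ((n : ℝ) / Real.sqrt k + Real.sqrt n) ≤ (m : ℝ) →
            c₂ ≤ ampErr (poissonizedModel k) n m)) := by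
  refine ⟨1 / 80, 2, (1 / 136) ^ 2 / 10, by norm_num, by norm_num, by norm_num,
    fun n k m hn hk => ⟨fun h => ?_, le_ampErr_poissonizedModel hn hk⟩⟩
  exact ampErr_poissonizedModel_le hn (by omega) h
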